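/- arXiv:2406.07821 — 10 statements merged into one kernel-verified Lean document; each statement's English description precedes it below -/
import Mathlib

section
/- Let $G$ be a connected graph on $n$ vertices, let $S \subseteq V(G)$ with $1 \le |S| < n$, and let $T$ be a set of isolated vertices of $G - S$ such that every vertex of $T$ is adjacent in $G$ to every vertex of $S$. Let $H_1$ and $H_2$ be two graphs with vertex set $T$, and for $i = 1, 2$ let $G_i$ be the graph obtained from $G$ by adding the edges of $H_i$ inside $T$. Then there exists a constant $R$ depending only on $|T|$ such that: if $\rho(G) > R$ and $H_1$ is walk-equivalent to $H_2$, then $\rho(G_1) = \rho(G_2)$. -/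
open Finset Matrix SimpleGraph
open scoped Classical

/-- `walkCount G ℓ u` is the number of walks of length `ℓ` in `G` starting at `u`
(the quantity `w^ℓ_G(u)` of the paper, with `walkCount G 0 u = 1`). -/
noncomputable def walkCount {V : Type*} [Fintype V] (G : SimpleGraph V) : ℕ → V → ℕ
  | 0, _ => 1
  | ℓ + 1, u => ∑ v ∈ Finset.univ.filter (fun v => G.Adj u v), walkCount G ℓ v

/-- `totalWalks G ℓ = W^ℓ(G) = ∑_u w^ℓ_G(u)`, the number of walks of length `ℓ` in `G`. -/
noncomputable def totalWalks {V : Type*} [Fintype V] (G : SimpleGraph V) (ℓ : ℕ) : ℕ :=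
  ∑ u, walkCount G ℓ u

/-- The spectral radius `ρ(G)` of a graph `G`: the largest eigenvalue of its
adjacency matrix. -/
noncomputable def spectralRad {V : Type*} [Fintype V] (G : SimpleGraph V) : ℝ :=
  sSup {μ : ℝ | ∃ x : V → ℝ, x ≠ 0 ∧ (G.adjMatrix ℝ) *ᵥ x = μ • x}

/-- The adjacency operator. -/
noncomputable def adjOp {V : Type*} [Fintype V] (G : SimpleGraph V) (x : V → ℝ) (u : V) : ℝ :=
  ∑ v, if G.Adj u v then x v else 0

lemma adjOp_eq {V : Type*} [Fintype V] (G : SimpleGraph V) (x : V → ℝ) :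
    (G.adjMatrix ℝ) *ᵥ x = adjOp G x := by
  ext u
  simp [adjOp, Matrix.mulVec, dotProduct, SimpleGraph.adjMatrix_apply]

def eigSet {V : Type*} [Fintype V] (G : SimpleGraph V) : Set ℝ :=
  {μ : ℝ | ∃ x : V → ℝ, x ≠ 0 ∧ (G.adjMatrix ℝ) *ᵥ x = μ • x}

lemma eigSet_bdd {V : Type*} [Fintype V] (G : SimpleGraph V) : BddAbove (eigSet G) := by
  refine ⟨(Fintype.card V : ℝ), ?_⟩
  rintro μ ⟨x, hx, h⟩
  rw [adjOp_eq] at h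
  obtain ⟨w, hw⟩ := Function.ne_iff.mp hx
  obtain ⟨u, -, hu⟩ := Finset.exists_max_image Finset.univ (fun v => |x v|) ⟨w, Finset.mem_univ w⟩
  have hpos : 0 < |x u| := lt_of_lt_of_le (abs_pos.mpr hw) (hu w (Finset.mem_univ w))
  have h1 : μ * x u = adjOp G x u := by rw [h]; simp
  have h2 : |adjOp G x u| ≤ Fintype.card V * |x u| := by
    unfold adjOp
    refine (Finset.abs_sum_le_sum_abs _ _).trans ?_
    refine (Finset.sum_le_card_nsmul _ _ (|x u|) ?_).trans ?_
    · intro v hv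
      split_ifs
      · exact hu v hv
      · simp
    · simp
  rw [← h1, abs_mul] at h2
  exact (le_abs_self μ).trans (le_of_mul_le_mul_right h2 hpos)

lemma rayleigh {V : Type*} [Fintype V] (G : SimpleGraph V) (x : V → ℝ) :
    ∑ u, x u * adjOp G x u ≤ spectralRad G * ∑ u, x u * x u := by
  have hH : (spectralRad G • (1 : Matrix V V ℝ) - G.adjMatrix ℝ).IsHermitian := by
    ext i j
    simp [Matrix.one_apply, SimpleGraph.adjMatrix_apply, eq_comm, G.adj_comm]
  have hP : (spectralRad G • (1 : Matrix V V ℝ) - G.adjMatrix ℝ).PosSemidef := by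
    rw [hH.posSemidef_iff_eigenvalues_nonneg]
    intro i
    have h1 := hH.mulVec_eigenvectorBasis i
    have h3 : spectralRad G - hH.eigenvalues i ∈ eigSet G := by
      refine ⟨(hH.eigenvectorBasis i).ofLp, ?_, ?_⟩
      · intro h0
        have := hH.eigenvectorBasis.orthonormal.ne_zero i
        apply this
        ext j
        exact congrFun h0 j
      · rw [Matrix.sub_mulVec, Matrix.smul_mulVec, Matrix.one_mulVec] at h1
        rw [sub_smul, ← h1]
        simp
    have h4 := le_csSup (eigSet_bdd G) h3
    have : sSup (eigSet G) = spectralRad G := rfl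
    rw [this] at h4
    show (0:ℝ) ≤ _
    linarith
  have := hP.dotProduct_mulVec_nonneg x
  rw [Matrix.sub_mulVec, Matrix.smul_mulVec, Matrix.one_mulVec, adjOp_eq] at this
  simp only [dotProduct, Pi.star_apply, star_trivial, Pi.sub_apply, Pi.smul_apply, smul_eq_mul,
    mul_sub, Finset.sum_sub_distrib] at this
  rw [Finset.mul_sum]
  have e : ∑ u, x u * (spectralRad G * x u) = ∑ u, spectralRad G * (x u * x u) :=
    Finset.sum_congr rfl fun u _ => by ring
  linarith

lemma eig_le_spectralRad {V : Type*} [Fintype V] (G G' : SimpleGraph V) (hG : G ≤ G') {μ : ℝ}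
    (hμ : μ ∈ eigSet G) : μ ≤ spectralRad G' := by
  obtain ⟨x, hx, h⟩ := hμ
  rw [adjOp_eq] at h
  have h1 := rayleigh G' (fun u => |x u|)
  have h2 : ∑ u, x u * adjOp G x u ≤ ∑ u, |x u| * adjOp G' (fun u => |x u|) u := by
    refine Finset.sum_le_sum fun u _ => ?_
    unfold adjOp
    rw [Finset.mul_sum, Finset.mul_sum]
    refine Finset.sum_le_sum fun v _ => ?_
    by_cases ha : G.Adj u v
    · have hb := hG ha
      simp only [ha, hb, if_true]
      rw [← abs_mul]
      exact le_abs_self _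
    · simp only [ha, if_false, mul_zero]
      split_ifs <;> positivity
  have h3 : ∑ u, x u * adjOp G x u = μ * ∑ u, x u * x u := by
    rw [h, Finset.mul_sum]
    refine Finset.sum_congr rfl fun u _ => ?_
    simp only [Pi.smul_apply, smul_eq_mul]
    ring
  simp only [abs_mul_abs_self] at h1
  obtain ⟨w, hw⟩ := Function.ne_iff.mp hx
  have hpos : 0 < ∑ u, x u * x u :=
    Finset.sum_pos' (fun u _ => mul_self_nonneg _) ⟨w, Finset.mem_univ w, mul_self_pos.mpr hw⟩
  exact le_of_mul_le_mul_right (by linarith) hpos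

section HT
variable {V : Type*} [Fintype V]

lemma walk_le (H : SimpleGraph V) (T : Finset V) (hH : ∀ u v, H.Adj u v → u ∈ T ∧ v ∈ T)
    (N : ℕ) (u : V) : walkCount H N u ≤ T.card ^ N := by
  induction N generalizing u with
  | zero => simp [walkCount]
  | succ N ih =>
    rw [walkCount, pow_succ']
    refine (Finset.sum_le_card_nsmul _ _ _ fun v _ => ih v).trans ?_
    rw [smul_eq_mul]
    refine Nat.mul_le_mul_right _ (Finset.card_le_card ?_)
    intro v hv
    exact (hH u v (by simpa using hv)).2

lemma walk_zero (H : SimpleGraph V) (T : Finset V) (hH : ∀ u v, H.Adj u v → u ∈ T ∧ v ∈ T)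
    (N : ℕ) (u : V) (hu : u ∉ T) : walkCount H (N + 1) u = 0 := by
  rw [walkCount]
  refine Finset.sum_eq_zero fun v hv => ?_
  exact absurd (hH u v (by simpa using hv)).1 hu

lemma adj_inj (H : SimpleGraph V) (T : Finset V) (hH : ∀ u v, H.Adj u v → u ∈ T ∧ v ∈ T)
    (μ : ℝ) (hμ : (T.card : ℝ) < μ) (x : V → ℝ) (h : ∀ u, adjOp H x u = μ * x u) : x = 0 := by
  by_contra hx
  obtain ⟨w, hw⟩ := Function.ne_iff.mp hx
  obtain ⟨u, -, hu⟩ := Finset.exists_max_image Finset.univ (fun v => |x v|) ⟨w, Finset.mem_univ w⟩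
  have hpos : 0 < |x u| := lt_of_lt_of_le (abs_pos.mpr hw) (hu w (Finset.mem_univ w))
  have h2 : |adjOp H x u| ≤ T.card * |x u| := by
    unfold adjOp
    rw [← Finset.sum_subset (Finset.subset_univ T)]
    · refine (Finset.abs_sum_le_sum_abs _ _).trans ?_
      refine (Finset.sum_le_card_nsmul _ _ (|x u|) ?_).trans ?_
      · intro v hv
        split_ifs
        · exact hu v (Finset.mem_univ v)
        · simp
      · simp
    · intro v _ hv
      rw [if_neg]
      exact fun ha => hv (hH _ _ ha).2
  rw [h u, abs_mul] at h2
  have := le_of_mul_le_mul_right h2 hpos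
  have := le_abs_self μ
  linarith

lemma exists_sol (H : SimpleGraph V) (T : Finset V) (hH : ∀ u v, H.Adj u v → u ∈ T ∧ v ∈ T)
    (μ : ℝ) (hμ : (T.card : ℝ) < μ) (g : V → ℝ) :
    ∃ b : V → ℝ, ∀ u, μ * b u = g u + adjOp H b u := by
  have hinj : Function.Injective (μ • (LinearMap.id : (V → ℝ) →ₗ[ℝ] (V → ℝ))
      - (H.adjMatrix ℝ).mulVecLin) := by
    rw [← LinearMap.ker_eq_bot, LinearMap.ker_eq_bot']
    intro x hx
    refine adj_inj H T hH μ hμ x fun u => ?_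
    have := congrFun hx u
    simp only [LinearMap.sub_apply, LinearMap.smul_apply, LinearMap.id_apply,
      Matrix.mulVecLin_apply, adjOp_eq, Pi.sub_apply, Pi.smul_apply, smul_eq_mul,
      Pi.zero_apply] at this
    linarith
  obtain ⟨b, hb⟩ := LinearMap.injective_iff_surjective.mp hinj g
  refine ⟨b, fun u => ?_⟩
  have := congrFun hb u
  simp only [LinearMap.sub_apply, LinearMap.smul_apply, LinearMap.id_apply,
      Matrix.mulVecLin_apply, adjOp_eq, Pi.sub_apply, Pi.smul_apply, smul_eq_mul] at this
  linarith

lemma walk_step (H : SimpleGraph V) (a : V → ℝ) (N : ℕ) :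
    ∑ u, (walkCount H (N + 1) u : ℝ) * a u = ∑ u, (walkCount H N u : ℝ) * adjOp H a u := by
  simp only [walkCount, adjOp, Finset.sum_filter, Nat.cast_sum, Nat.cast_ite, Nat.cast_zero,
    Finset.sum_mul, Finset.mul_sum]
  rw [Finset.sum_comm]
  refine Finset.sum_congr rfl fun v _ => Finset.sum_congr rfl fun u _ => ?_
  simp only [H.adj_comm u v]
  split_ifs <;> simp

lemma walk_bound (H : SimpleGraph V) (T : Finset V) (hH : ∀ u v, H.Adj u v → u ∈ T ∧ v ∈ T)
    (a : V → ℝ) (N : ℕ) :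
    |∑ u, (walkCount H N u : ℝ) * a u| ≤ (T.card : ℝ) ^ N * ∑ u, |a u| := by
  refine (Finset.abs_sum_le_sum_abs _ _).trans ?_
  rw [Finset.mul_sum]
  refine Finset.sum_le_sum fun u _ => ?_
  rw [abs_mul, Nat.abs_cast]
  have : (walkCount H N u : ℝ) ≤ (T.card : ℝ) ^ N := by exact_mod_cast walk_le H T hH N u
  gcongr

lemma walk_T (H : SimpleGraph V) (T : Finset V) (hH : ∀ u v, H.Adj u v → u ∈ T ∧ v ∈ T)
    (s : ℝ) (N : ℕ) :
    ∑ u, (walkCount H (N+1) u : ℝ) * (if u ∈ T then s else 0) = s * totalWalks H (N+1) := by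
  rw [totalWalks, Nat.cast_sum, Finset.mul_sum]
  refine Finset.sum_congr rfl fun u _ => ?_
  by_cases hu : u ∈ T
  · simp [hu, mul_comm]
  · simp [hu, walk_zero H T hH N u hu]

lemma sums_eq (H₁ H₂ : SimpleGraph V) (T : Finset V)
    (h1 : ∀ u v, H₁.Adj u v → u ∈ T ∧ v ∈ T) (h2 : ∀ u v, H₂.Adj u v → u ∈ T ∧ v ∈ T)
    (hw : ∀ i : ℕ, 1 ≤ i → totalWalks H₁ i = totalWalks H₂ i)
    (μ : ℝ) (hμ : (T.card : ℝ) < μ) (s : ℝ) (a b : V → ℝ)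
    (ha : ∀ u, μ * a u = (if u ∈ T then s else 0) + adjOp H₁ a u)
    (hb : ∀ u, μ * b u = (if u ∈ T then s else 0) + adjOp H₂ b u) :
    ∑ u, a u = ∑ u, b u := by
  have hT : ∀ N, ∑ u, (walkCount H₁ N u : ℝ) * (if u ∈ T then s else 0)
      = ∑ u, (walkCount H₂ N u : ℝ) * (if u ∈ T then s else 0) := by
    intro N
    cases N with
    | zero => simp [walkCount]
    | succ N => rw [walk_T H₁ T h1, walk_T H₂ T h2, hw _ (by omega)]
  have key : ∀ (H : SimpleGraph V) (c : V → ℝ),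
      (∀ u, μ * c u = (if u ∈ T then s else 0) + adjOp H c u) → ∀ N,
      ∑ u, (walkCount H (N+1) u : ℝ) * c u = μ * ∑ u, (walkCount H N u : ℝ) * c u
        - ∑ u, (walkCount H N u : ℝ) * (if u ∈ T then s else 0) := by
    intro H c hc N
    rw [walk_step, Finset.mul_sum, ← Finset.sum_sub_distrib]
    refine Finset.sum_congr rfl fun u _ => ?_
    have : adjOp H c u = μ * c u - (if u ∈ T then s else 0) := by rw [hc u]; ring
    rw [this]; ring
  have hpow : ∀ N, ∑ u, (walkCount H₁ N u : ℝ) * a u - ∑ u, (walkCount H₂ N u : ℝ) * b u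
      = μ ^ N * (∑ u, a u - ∑ u, b u) := by
    intro N
    induction N with
    | zero => simp [walkCount]
    | succ N ih =>
      rw [key H₁ a ha, key H₂ b hb, hT, pow_succ', mul_assoc, ← ih]
      ring
  set e := ∑ u, a u - ∑ u, b u with he
  set C := ∑ u, |a u| + ∑ u, |b u| with hC
  have hμ0 : 0 < μ := lt_of_le_of_lt (Nat.cast_nonneg _) hμ
  have hbd : ∀ N : ℕ, |e| ≤ ((T.card : ℝ) / μ) ^ N * C := by
    intro N
    have b1 := walk_bound H₁ T h1 a N
    have b2 := walk_bound H₂ T h2 b N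
    have b3 := abs_sub (∑ u, (walkCount H₁ N u : ℝ) * a u) (∑ u, (walkCount H₂ N u : ℝ) * b u)
    rw [hpow N, abs_mul, abs_of_pos (pow_pos hμ0 N)] at b3
    have hp := pow_pos hμ0 N
    rw [div_pow, div_mul_eq_mul_div, le_div_iff₀ hp, hC]
    linarith
  have hlim : Filter.Tendsto (fun N : ℕ => ((T.card : ℝ) / μ) ^ N * C) Filter.atTop
      (nhds (0 * C)) := by
    refine Filter.Tendsto.mul_const _ (tendsto_pow_atTop_nhds_zero_of_lt_one (by positivity) ?_)
    rwa [div_lt_one hμ0]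
  have : |e| ≤ 0 * C := ge_of_tendsto' hlim hbd
  rw [zero_mul] at this
  have := abs_nonpos_iff.mp this
  linarith

lemma adjOp_add (G : SimpleGraph V) (x y : V → ℝ) (u : V) :
    adjOp G (fun v => x v + y v) u = adjOp G x u + adjOp G y u := by
  simp only [adjOp, ← Finset.sum_add_distrib]
  refine Finset.sum_congr rfl fun v _ => ?_
  split_ifs <;> simp

lemma adjOp_congr (H : SimpleGraph V) (T : Finset V) (hH : ∀ u v, H.Adj u v → u ∈ T ∧ v ∈ T)
    (x y : V → ℝ) (h : ∀ u ∈ T, x u = y u) (u : V) : adjOp H x u = adjOp H y u := by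
  refine Finset.sum_congr rfl fun v _ => ?_
  split_ifs with ha
  · exact h v (hH _ _ ha).2
  · rfl

lemma adjOp_off (H : SimpleGraph V) (T : Finset V) (hH : ∀ u v, H.Adj u v → u ∈ T ∧ v ∈ T)
    (x : V → ℝ) (u : V) (hu : u ∉ T) : adjOp H x u = 0 := by
  refine Finset.sum_eq_zero fun v _ => ?_
  rw [if_neg]
  exact fun ha => hu (hH _ _ ha).1

lemma adjOp_sup (G H : SimpleGraph V) (hd : ∀ u v, G.Adj u v → ¬ H.Adj u v) (x : V → ℝ) (u : V) :
    adjOp (G ⊔ H) x u = adjOp G x u + adjOp H x u := by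
  simp only [adjOp, ← Finset.sum_add_distrib]
  refine Finset.sum_congr rfl fun v _ => ?_
  have := hd u v
  by_cases h1 : G.Adj u v
  · simp [h1, this h1]
  · simp [h1]

lemma transfer (G H₁ H₂ : SimpleGraph V) (S T : Finset V)
    (hTS : ∀ u ∈ T, u ∉ S)
    (hiso : ∀ u ∈ T, ∀ v, v ∉ S → ¬ G.Adj u v)
    (hall : ∀ u ∈ T, ∀ s ∈ S, G.Adj u s)
    (h1 : ∀ u v, H₁.Adj u v → u ∈ T ∧ v ∈ T) (h2 : ∀ u v, H₂.Adj u v → u ∈ T ∧ v ∈ T)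
    (hw : ∀ i : ℕ, 1 ≤ i → totalWalks H₁ i = totalWalks H₂ i)
    (μ : ℝ) (hμ : (T.card : ℝ) < μ) (hmem : μ ∈ eigSet (G ⊔ H₁)) : μ ∈ eigSet (G ⊔ H₂) := by
  obtain ⟨x, hx, h⟩ := hmem
  rw [adjOp_eq] at h
  have hd : ∀ H : SimpleGraph V, (∀ u v, H.Adj u v → u ∈ T ∧ v ∈ T) →
      ∀ u v, G.Adj u v → ¬ H.Adj u v := by
    intro H hH u v hg hh
    exact hiso u (hH u v hh).1 v (hTS v (hH u v hh).2) hg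
  have hμ0 : 0 < μ := lt_of_le_of_lt (Nat.cast_nonneg _) hμ
  have hx' : ∀ u, adjOp G x u + adjOp H₁ x u = μ * x u := by
    intro u
    rw [← adjOp_sup G H₁ (hd H₁ h1), h]; simp
  set s := ∑ v ∈ S, x v with hs
  have hGs : ∀ u ∈ T, adjOp G x u = s := by
    intro u hu
    rw [hs, adjOp, ← Finset.sum_filter]
    refine Finset.sum_congr ?_ fun _ _ => rfl
    ext v
    simp only [Finset.mem_filter, Finset.mem_univ, true_and]
    exact ⟨fun ha => by by_contra hv; exact hiso u hu v hv ha, fun hv => hall u hu v hv⟩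
  set a : V → ℝ := fun u => if u ∈ T then x u else 0 with hadef
  have haH : ∀ u, adjOp H₁ x u = adjOp H₁ a u :=
    adjOp_congr H₁ T h1 x a fun u hu => by simp [hadef, hu]
  have ha : ∀ u, μ * a u = (if u ∈ T then s else 0) + adjOp H₁ a u := by
    intro u
    by_cases hu : u ∈ T
    · rw [← haH, if_pos hu, ← hGs u hu, hx']; simp [hadef, hu]
    · rw [adjOp_off H₁ T h1 a u hu]; simp [hadef, hu]
  obtain ⟨b, hb⟩ := exists_sol H₂ T h2 μ hμ (fun u => if u ∈ T then s else 0)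
  have hsum := sums_eq H₁ H₂ T h1 h2 hw μ hμ s a b ha hb
  have hb0 : ∀ u, u ∉ T → b u = 0 := by
    intro u hu
    have := hb u
    rw [adjOp_off H₂ T h2 b u hu] at this
    simp only [hu, if_false, add_zero] at this
    exact (mul_eq_zero.mp this).resolve_left hμ0.ne'
  have ha0 : ∀ u, u ∉ T → a u = 0 := fun u hu => by simp [hadef, hu]
  have hGc : ∀ u, adjOp G (fun v => b v - a v) u = 0 := by
    intro u
    by_cases hu : u ∈ S
    · have : adjOp G (fun v => b v - a v) u = ∑ v, (b v - a v) := by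
        refine Finset.sum_congr rfl fun v _ => ?_
        by_cases hv : v ∈ T
        · rw [if_pos (hall v hv u hu).symm]
        · simp [ha0 v hv, hb0 v hv]
      rw [this, Finset.sum_sub_distrib, hsum, sub_self]
    · refine Finset.sum_eq_zero fun v _ => ?_
      by_cases hv : v ∈ T
      · rw [if_neg fun hh => hiso v hv u hu hh.symm]
      · simp [ha0 v hv, hb0 v hv]
  refine ⟨fun v => x v + (b v - a v), ?_, ?_⟩
  · intro hy
    have hxo : ∀ u, u ∉ T → x u = 0 := by
      intro u hu
      have := congrFun hy u
      simpa [ha0 u hu, hb0 u hu] using this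
    have hs0 : s = 0 := Finset.sum_eq_zero fun v hv => hxo v fun hT => hTS v hT hv
    apply hx
    refine adj_inj H₁ T h1 μ hμ x fun u => ?_
    rw [haH]
    have := ha u
    rw [hs0] at this
    simp only [ite_self, zero_add] at this
    rw [← this]
    by_cases hu : u ∈ T
    · simp [hadef, hu]
    · simp [hadef, hu, hxo u hu]
  · rw [adjOp_eq]
    ext u
    rw [adjOp_sup G H₂ (hd H₂ h2), adjOp_add, hGc]
    have e : adjOp H₂ (fun v => x v + (b v - a v)) u = adjOp H₂ b u :=
      adjOp_congr H₂ T h2 _ _ (fun u hu => by simp [hadef, hu]) u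
    rw [e]
    simp only [Pi.smul_apply, smul_eq_mul]
    have e1 := hx' u
    have e2 := ha u
    have e3 := hb u
    have e4 := haH u
    linarith

lemma rad_le (G₁ G₂ : SimpleGraph V) (t : ℝ) (ht : 0 ≤ t)
    (h2 : t < spectralRad G₂) (h : ∀ μ, t < μ → μ ∈ eigSet G₁ → μ ∈ eigSet G₂) :
    spectralRad G₁ ≤ spectralRad G₂ := by
  refine Real.sSup_le ?_ (by linarith)
  intro μ hμ
  by_cases hm : t < μ
  · exact le_csSup (eigSet_bdd G₂) (h μ hm hμ)
  · linarith

end HT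

/-- If `H₁` and `H₂` (graphs on the set `T` of common-neighborhood isolated
vertices of `G - S`) are walk-equivalent, then the graphs obtained from `G` by embedding
their edges have equal spectral radius, provided `ρ(G)` is large enough in terms of `|T|`. -/
theorem stmt_0 (t : ℕ) :
    ∃ R : ℝ, ∀ (V : Type) [Fintype V], ∀ (G H₁ H₂ : SimpleGraph V) (S T : Finset V),
      G.Connected →
      1 ≤ S.card → S.card < Fintype.card V →
      T.card = t →
      (∀ u ∈ T, u ∉ S) →
      (∀ u ∈ T, ∀ v, v ∉ S → ¬ G.Adj u v) →
      (∀ u ∈ T, ∀ s ∈ S, G.Adj u s) →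
      (∀ u v, H₁.Adj u v → u ∈ T ∧ v ∈ T) →
      (∀ u v, H₂.Adj u v → u ∈ T ∧ v ∈ T) →
      spectralRad G > R →
      (∀ i : ℕ, 1 ≤ i → totalWalks H₁ i = totalWalks H₂ i) →
      spectralRad (G ⊔ H₁) = spectralRad (G ⊔ H₂) := by
  refine ⟨t, ?_⟩
  intro V _ G H₁ H₂ S T _ _ _ hT hTS hiso hall h1 h2 hR hw
  subst hT
  have ht : (0 : ℝ) ≤ (T.card : ℝ) := Nat.cast_nonneg _
  have hne : (eigSet G).Nonempty := by
    by_contra hne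
    rw [Set.not_nonempty_iff_eq_empty] at hne
    have : spectralRad G = 0 := by
      show sSup (eigSet G) = 0
      rw [hne, Real.sSup_empty]
    linarith
  obtain ⟨μ, hμ, hlt⟩ := exists_lt_of_lt_csSup hne hR
  have g1 : (T.card : ℝ) < spectralRad (G ⊔ H₁) :=
    hlt.trans_le (eig_le_spectralRad G _ le_sup_left hμ)
  have g2 : (T.card : ℝ) < spectralRad (G ⊔ H₂) :=
    hlt.trans_le (eig_le_spectralRad G _ le_sup_left hμ)
  apply le_antisymm
  · exact rad_le _ _ _ ht g2 fun μ hm hh =>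
      transfer G H₁ H₂ S T hTS hiso hall h1 h2 hw μ hm hh
  · exact rad_le _ _ _ ht g1 fun μ hm hh =>
      transfer G H₂ H₁ S T hTS hiso hall h2 h1 (fun i hi => (hw i hi).symm) μ hm hh
end

section
/- Let $G$ be a connected graph on $n$ vertices, let $S \subseteq V(G)$ with $1 \le |S| < n$, and let $T$ be a set of isolated vertices of $G - S$ such that every vertex of $T$ is adjacent in $G$ to every vertex of $S$. Let $H_1$ and $H_2$ be two graphs with vertex set $T$, and for $i = 1, 2$ let $G_i$ be the graph obtained from $G$ by adding the edges of $H_i$ inside $T$. Then there exists a constant $R$ depending only on $|T|$ such that: if $\rho(G) > R$ and $H_1$ is strictly walk-preferable to $H_2$, then $\rho(G_1) > \rho(G_2)$. -/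
open Finset Matrix SimpleGraph
open scoped Classical

/-- Action of the adjacency matrix, as an explicit sum. -/
noncomputable def adjAct {V : Type*} [Fintype V] (G : SimpleGraph V) (x : V → ℝ) (u : V) : ℝ :=
  ∑ v, if G.Adj u v then x v else 0

lemma adjAct_eq {V : Type*} [Fintype V] (G : SimpleGraph V) (x : V → ℝ) :
    (G.adjMatrix ℝ) *ᵥ x = adjAct G x := by
  funext u
  simp [adjAct, Matrix.mulVec, dotProduct, SimpleGraph.adjMatrix_apply]

lemma sq_dot_pos {V : Type*} [Fintype V] (x : V → ℝ) (hx : x ≠ 0) : 0 < x ⬝ᵥ x := by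
  have h := dotProduct_self_star_nonneg x
  simp only [star_trivial] at h
  rcases h.lt_or_eq with h | h
  · exact h
  · exact absurd (dotProduct_self_eq_zero.1 h.symm) hx

lemma perron {V : Type*} [Fintype V] [Nonempty V] (G : SimpleGraph V) :
    ∃ x : V → ℝ, x ≠ 0 ∧ (∀ v, 0 ≤ x v) ∧ (∀ v, adjAct G x v = spectralRad G * x v) ∧
      ∀ y : V → ℝ, ∑ v, y v * adjAct G y v ≤ spectralRad G * ∑ v, y v * y v := by
  set A := G.adjMatrix ℝ with hA
  have hq : ∀ y : V → ℝ, y ⬝ᵥ (A *ᵥ y) = ∑ v, y v * adjAct G y v := by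
    intro y; rw [hA, adjAct_eq]; rfl
  let K : Set (V → ℝ) := {x | x ⬝ᵥ x = 1}
  have hKc : IsCompact K := by
    apply Metric.isCompact_of_isClosed_isBounded
    · exact isClosed_eq (by unfold dotProduct; fun_prop) continuous_const
    · refine (Metric.isBounded_closedBall (x := (0 : V → ℝ)) (r := 1)).subset ?_
      intro x hx
      rw [mem_closedBall_zero_iff, pi_norm_le_iff_of_nonneg zero_le_one]
      intro v
      have h1 : x v * x v ≤ x ⬝ᵥ x :=
        Finset.single_le_sum (f := fun v => x v * x v) (fun i _ => mul_self_nonneg _) (mem_univ v)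
      have hx' : x ⬝ᵥ x = 1 := hx
      rw [Real.norm_eq_abs]
      apply abs_le_one_iff_mul_self_le_one.2
      linarith
  have hKn : K.Nonempty := by
    obtain ⟨v⟩ := (inferInstance : Nonempty V)
    refine ⟨Pi.single v 1, ?_⟩
    simp [K]
  obtain ⟨x0, hx0, hmax⟩ := hKc.exists_isMaxOn hKn
    (f := fun y => y ⬝ᵥ (A *ᵥ y)) (by unfold dotProduct Matrix.mulVec dotProduct; fun_prop)
  set μ := x0 ⬝ᵥ (A *ᵥ x0) with hμ
  have hray : ∀ y : V → ℝ, y ⬝ᵥ (A *ᵥ y) ≤ μ * (y ⬝ᵥ y) := by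
    intro y
    by_cases hy : y = 0
    · simp [hy]
    have hp := sq_dot_pos y hy
    have hs : 0 < Real.sqrt (y ⬝ᵥ y) := Real.sqrt_pos.2 hp
    have hss := Real.mul_self_sqrt hp.le
    set r := Real.sqrt (y ⬝ᵥ y)
    have hm : r⁻¹ • y ∈ K := by
      change (r⁻¹ • y) ⬝ᵥ (r⁻¹ • y) = 1
      rw [smul_dotProduct, dotProduct_smul, ← hss]
      simp only [smul_eq_mul]; field_simp
    have := hmax hm
    simp only [Set.mem_ofPred_eq, Matrix.mulVec_smul, smul_dotProduct, dotProduct_smul,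
      smul_eq_mul] at this
    rw [← hss]
    have h2 := mul_le_mul_of_nonneg_left this (mul_self_nonneg r)
    have h3 : r * r * (r⁻¹ * (r⁻¹ * y ⬝ᵥ A *ᵥ y)) = y ⬝ᵥ A *ᵥ y := by field_simp
    rw [h3] at h2
    linarith
  let x : V → ℝ := fun v => |x0 v|
  have hxx : x ⬝ᵥ x = 1 := by
    have : x0 ⬝ᵥ x0 = 1 := hx0
    rw [← this]
    simp [x, dotProduct]
  have hxq : μ ≤ x ⬝ᵥ (A *ᵥ x) := by
    rw [hμ, hq, hq]
    apply Finset.sum_le_sum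
    intro v _
    simp only [adjAct, Finset.mul_sum]
    apply Finset.sum_le_sum
    intro w _
    split_ifs
    · simp only [x]; rw [← abs_mul]; exact le_abs_self _
    · simp
  have hx0' : x ≠ 0 := by
    intro h; rw [h] at hxx; simp at hxx
  have hpsd : (μ • (1 : Matrix V V ℝ) - A).PosSemidef := by
    apply Matrix.PosSemidef.of_dotProduct_mulVec_nonneg
    · have := G.isSymm_adjMatrix (α := ℝ)
      ext i j
      simp [hA, SimpleGraph.adjMatrix_apply, Matrix.one_apply, SimpleGraph.adj_comm, eq_comm]
    · intro y
      have := hray y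
      simp only [star_trivial, Matrix.sub_mulVec, Matrix.smul_mulVec, Matrix.one_mulVec,
        dotProduct_sub, dotProduct_smul, smul_eq_mul]
      linarith
  have heig : A *ᵥ x = μ • x := by
    have h := (hpsd.dotProduct_mulVec_zero_iff x).1 (by
      have := hray x
      simp only [star_trivial, Matrix.sub_mulVec, Matrix.smul_mulVec, Matrix.one_mulVec,
        dotProduct_sub, dotProduct_smul, smul_eq_mul]
      rw [hxx] at this ⊢
      linarith)
    simp only [Matrix.sub_mulVec, Matrix.smul_mulVec, Matrix.one_mulVec] at h
    exact (sub_eq_zero.1 h).symm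
  have hρ : spectralRad G = μ := by
    apply IsGreatest.csSup_eq
    refine ⟨⟨x, hx0', heig⟩, ?_⟩
    rintro ν ⟨y, hy, hyν⟩
    have h1 := hray y
    have h2 : A *ᵥ y = ν • y := hyν
    rw [h2, dotProduct_smul, smul_eq_mul] at h1
    exact le_of_mul_le_mul_right h1 (sq_dot_pos y hy)
  rw [hρ]
  refine ⟨x, hx0', fun v => abs_nonneg _, ?_, ?_⟩
  · intro v
    have := congrFun heig v
    rw [hA, adjAct_eq] at this
    simpa using this
  · intro y
    rw [← hq]
    exact hray y

lemma spectralRad_mono {V : Type*} [Fintype V] [Nonempty V] (G H : SimpleGraph V) (h : G ≤ H) :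
    spectralRad G ≤ spectralRad H := by
  obtain ⟨x, hx, hx0, he, -⟩ := perron G
  obtain ⟨-, -, -, -, hr⟩ := perron H
  have h1 := hr x
  have h2 : ∑ v, x v * adjAct G x v ≤ ∑ v, x v * adjAct H x v := by
    apply Finset.sum_le_sum
    intro v _
    apply mul_le_mul_of_nonneg_left _ (hx0 v)
    apply Finset.sum_le_sum
    intro w _
    by_cases hg : G.Adj v w
    · simp [hg, h hg]
    · simp only [hg, if_false]; split_ifs <;> simp [hx0]
  have h3 : ∑ v, x v * adjAct G x v = spectralRad G * ∑ v, x v * x v := by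
    rw [Finset.mul_sum]
    exact Finset.sum_congr rfl fun v _ => by rw [he]; ring
  have := sq_dot_pos x hx
  exact le_of_mul_le_mul_right (h3 ▸ h2.trans h1) this

/-! ### The small graph -/

lemma adjAct_add {V : Type*} [Fintype V] (K : SimpleGraph V) (x y : V → ℝ) (u : V) :
    adjAct K (fun v => x v + y v) u = adjAct K x u + adjAct K y u := by
  simp only [adjAct, ← Finset.sum_add_distrib]
  exact Finset.sum_congr rfl fun v _ => by split_ifs <;> simp

lemma adjAct_smul {V : Type*} [Fintype V] (K : SimpleGraph V) (c : ℝ) (x : V → ℝ) (u : V) :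
    adjAct K (fun v => c * x v) u = c * adjAct K x u := by
  simp only [adjAct, Finset.mul_sum]
  exact Finset.sum_congr rfl fun v _ => by split_ifs <;> simp

lemma adjAct_walk {V : Type*} [Fintype V] (K : SimpleGraph V) (k : ℕ) (u : V) :
    adjAct K (fun v => (walkCount K k v : ℝ)) u = walkCount K (k + 1) u := by
  simp [adjAct, walkCount, Finset.sum_filter]

lemma adjAct_abs_le {t : ℕ} (K : SimpleGraph (Fin t)) (x : Fin t → ℝ) (M : ℝ)
    (h : ∀ v, |x v| ≤ M) (u : Fin t) : |adjAct K x u| ≤ t * M := by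
  have hM : 0 ≤ M := (abs_nonneg _).trans (h u)
  calc |adjAct K x u| ≤ ∑ v, |if K.Adj u v then x v else 0| := Finset.abs_sum_le_sum_abs _ _
    _ ≤ ∑ _v : Fin t, M := by
        apply Finset.sum_le_sum
        intro v _
        split_ifs
        · exact h v
        · simpa using hM
    _ = t * M := by simp

lemma sol_exists {t : ℕ} (K : SimpleGraph (Fin t)) (ρ : ℝ) (hρ : (t : ℝ) < ρ) :
    ∃ z : Fin t → ℝ, ∀ u, ρ * z u = 1 + adjAct K z u := by
  let M : Matrix (Fin t) (Fin t) ℝ := ρ • 1 - K.adjMatrix ℝ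
  have hinj : Function.Injective M.mulVecLin := by
    rw [← LinearMap.ker_eq_bot, LinearMap.ker_eq_bot']
    intro x hx
    have hx' : ∀ u, ρ * x u = adjAct K x u := by
      intro u
      have := congrFun hx u
      simp only [M, Matrix.mulVecLin_apply, Matrix.sub_mulVec, Matrix.smul_mulVec,
        Matrix.one_mulVec, adjAct_eq] at this
      simp at this
      linarith
    funext u
    have hne : (univ : Finset (Fin t)).Nonempty := ⟨u, mem_univ u⟩
    obtain ⟨w, -, hw⟩ := Finset.exists_max_image univ (fun v => |x v|) hne
    have h1 := adjAct_abs_le K x (|x w|) (fun v => hw v (mem_univ v)) w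
    have ht : (0 : ℝ) ≤ t := Nat.cast_nonneg t
    rw [← hx', abs_mul, abs_of_pos (by linarith)] at h1
    have h2 : |x w| ≤ 0 := by
      by_contra hc
      push Not at hc
      nlinarith
    have := (hw u (mem_univ u)).trans h2
    simpa using this
  obtain ⟨z, hz⟩ := (LinearMap.injective_iff_surjective.1 hinj) (fun _ => 1)
  refine ⟨z, fun u => ?_⟩
  have := congrFun hz u
  simp only [M, Matrix.mulVecLin_apply, Matrix.sub_mulVec, Matrix.smul_mulVec,
    Matrix.one_mulVec, adjAct_eq] at this
  simp at this
  linarith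

/-- bound on the solution -/
lemma sol_bound {t : ℕ} (K : SimpleGraph (Fin t)) (ρ : ℝ) (hρ : (t : ℝ) < ρ)
    (z : Fin t → ℝ) (hz : ∀ u, ρ * z u = 1 + adjAct K z u) (u : Fin t) :
    |z u| ≤ 1 / (ρ - t) := by
  obtain ⟨w, -, hw⟩ := Finset.exists_max_image univ (fun v => |z v|) ⟨u, mem_univ u⟩
  have h1 := adjAct_abs_le K z (|z w|) (fun v => hw v (mem_univ v)) w
  have ht : (0 : ℝ) ≤ t := Nat.cast_nonneg t
  have h2 : ρ * |z w| ≤ 1 + t * |z w| := by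
    rw [← abs_of_pos (show 0 < ρ by linarith), ← abs_mul, hz]
    refine (abs_add_le _ _).trans ?_
    simpa using h1
  refine (hw u (mem_univ u)).trans ?_
  rw [le_div_iff₀ (by linarith)]
  linarith

lemma iter_bound {t : ℕ} (K : SimpleGraph (Fin t)) (z : Fin t → ℝ) (M : ℝ)
    (h : ∀ v, |z v| ≤ M) (k : ℕ) : ∀ u, |((adjAct K)^[k] z) u| ≤ t ^ k * M := by
  induction k with
  | zero => simpa using h
  | succ k ih =>
    intro u
    rw [Function.iterate_succ_apply']
    refine (adjAct_abs_le K _ _ ih u).trans (le_of_eq ?_)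
    ring

lemma expansion {t : ℕ} (K : SimpleGraph (Fin t)) (ρ : ℝ)
    (z : Fin t → ℝ) (hz : ∀ u, ρ * z u = 1 + adjAct K z u) (k : ℕ) :
    ∀ u, ρ ^ k * z u = (∑ i ∈ range k, ρ ^ (k - 1 - i) * walkCount K i u)
      + ((adjAct K)^[k] z) u := by
  -- one step for the iterates
  have step : ∀ k u, ρ * ((adjAct K)^[k] z) u = walkCount K k u + ((adjAct K)^[k+1] z) u := by
    intro k
    induction k with
    | zero => intro u; simpa [walkCount] using hz u
    | succ k ih =>
      intro u
      rw [Function.iterate_succ_apply', Function.iterate_succ_apply' _ (k+1), ← adjAct_smul,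
        ← adjAct_walk, ← adjAct_add]
      congr 1
      funext v
      exact ih v
  induction k with
  | zero => simp
  | succ k ih =>
    intro u
    rw [pow_succ', mul_assoc, ih, mul_add, step, Finset.sum_range_succ, Finset.mul_sum]
    have : ∑ i ∈ range k, ρ * (ρ ^ (k - 1 - i) * (walkCount K i u : ℝ)) =
        ∑ i ∈ range k, ρ ^ (k + 1 - 1 - i) * (walkCount K i u : ℝ) := by
      apply Finset.sum_congr rfl
      intro i hi
      have hi := Finset.mem_range.1 hi
      rw [show k + 1 - 1 - i = (k - 1 - i) + 1 by omega]
      ring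
    rw [this]
    simp
    ring

lemma small_compare {t : ℕ} (K₁ K₂ : SimpleGraph (Fin t)) :
    ∃ R : ℝ, (t : ℝ) ≤ R ∧ ((∃ ℓ : ℕ, 1 ≤ ℓ ∧ totalWalks K₂ ℓ < totalWalks K₁ ℓ ∧
        ∀ i : ℕ, 1 ≤ i → i ≤ ℓ - 1 → totalWalks K₁ i = totalWalks K₂ i) →
      ∀ ρ > R, ∀ z₁ z₂ : Fin t → ℝ, (∀ u, ρ * z₁ u = 1 + adjAct K₁ z₁ u) →
        (∀ u, ρ * z₂ u = 1 + adjAct K₂ z₂ u) → ∑ u, z₂ u < ∑ u, z₁ u) := by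
  by_cases hex : ∃ ℓ : ℕ, 1 ≤ ℓ ∧ totalWalks K₂ ℓ < totalWalks K₁ ℓ ∧
        ∀ i : ℕ, 1 ≤ i → i ≤ ℓ - 1 → totalWalks K₁ i = totalWalks K₂ i
  swap
  · exact ⟨t, le_rfl, fun h => absurd h hex⟩
  obtain ⟨ℓ, hl1, hlt, heq⟩ := hex
  refine ⟨t + 2 * (t : ℝ) ^ (ℓ + 2), by simp, ?_⟩
  rintro - ρ hρ z₁ z₂ h₁ h₂
  have hpow : (0 : ℝ) ≤ (t : ℝ) ^ (ℓ + 2) := by positivity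
  have htρ : (t : ℝ) < ρ := by linarith
  have ht : (0 : ℝ) ≤ t := Nat.cast_nonneg t
  have hρ0 : 0 < ρ := by linarith
  have tot : ∀ (K : SimpleGraph (Fin t)) (z : Fin t → ℝ), (∀ u, ρ * z u = 1 + adjAct K z u) →
      ρ ^ (ℓ + 1) * ∑ u, z u = (∑ i ∈ range (ℓ + 1), ρ ^ (ℓ - i) * (totalWalks K i : ℝ))
        + ∑ u, ((adjAct K)^[ℓ + 1] z) u := by
    intro K z hz
    rw [Finset.mul_sum, Finset.sum_congr rfl (fun u _ => expansion K ρ z hz (ℓ + 1) u),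
      Finset.sum_add_distrib, Finset.sum_comm]
    congr 1
    apply Finset.sum_congr rfl
    intro i _
    simp [totalWalks, Finset.mul_sum]
  have bd : ∀ (K : SimpleGraph (Fin t)) (z : Fin t → ℝ), (∀ u, ρ * z u = 1 + adjAct K z u) →
      |∑ u, ((adjAct K)^[ℓ + 1] z) u| < 1 / 2 := by
    intro K z hz
    have h1 := iter_bound K z _ (sol_bound K ρ htρ z hz) (ℓ + 1)
    have h2 : |∑ u, ((adjAct K)^[ℓ + 1] z) u| ≤ t * ((t : ℝ) ^ (ℓ + 1) * (1 / (ρ - t))) := by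
      refine (Finset.abs_sum_le_sum_abs _ _).trans ?_
      refine (Finset.sum_le_sum fun u _ => h1 u).trans ?_
      simp
    refine h2.trans_lt ?_
    have : (t : ℝ) * ((t : ℝ) ^ (ℓ + 1) * (1 / (ρ - t))) = (t : ℝ) ^ (ℓ + 2) / (ρ - t) := by
      ring
    rw [this, div_lt_iff₀ (by linarith)]
    linarith
  have e1 := tot K₁ z₁ h₁
  have e2 := tot K₂ z₂ h₂
  have b1 := abs_lt.1 (bd K₁ z₁ h₁)
  have b2 := abs_lt.1 (bd K₂ z₂ h₂)
  rw [Finset.sum_range_succ] at e1 e2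
  have hs : ∑ i ∈ range ℓ, ρ ^ (ℓ - i) * (totalWalks K₁ i : ℝ) =
      ∑ i ∈ range ℓ, ρ ^ (ℓ - i) * (totalWalks K₂ i : ℝ) := by
    apply Finset.sum_congr rfl
    intro i hi
    have hi := Finset.mem_range.1 hi
    rcases Nat.eq_zero_or_pos i with h0 | h0
    · subst h0; simp [totalWalks, walkCount]
    · rw [heq i h0 (by omega)]
  have hlt' : (totalWalks K₂ ℓ : ℝ) + 1 ≤ totalWalks K₁ ℓ := by exact_mod_cast hlt
  simp only [Nat.sub_self, pow_zero, one_mul] at e1 e2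
  have : ρ ^ (ℓ + 1) * ∑ u, z₂ u < ρ ^ (ℓ + 1) * ∑ u, z₁ u := by
    rw [e1, e2, hs]; linarith [b1.1, b2.2]
  exact lt_of_mul_lt_mul_left this (by positivity)

/-! ### Transfer to `Fin t` -/

lemma sum_supp {V M : Type*} [Fintype V] [AddCommMonoid M] {t : ℕ} (T : Finset V)
    (e : Fin t ≃ T) (f : V → M)
    (h : ∀ v, v ∉ T → f v = 0) : ∑ v, f v = ∑ a, f (e a) := by
  rw [← Finset.sum_subset (Finset.subset_univ T) (fun v _ hv => h v hv), ← Finset.sum_coe_sort,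
    ← e.sum_comp]

lemma walk_transfer {V : Type*} [Fintype V] {t : ℕ} (H : SimpleGraph V) (T : Finset V)
    (e : Fin t ≃ T) (hH : ∀ u v, H.Adj u v → u ∈ T ∧ v ∈ T) (k : ℕ) :
    ∀ a, walkCount H k (e a) = walkCount (H.comap (fun a => (e a : V))) k a := by
  induction k with
  | zero => intro a; rfl
  | succ k ih =>
    intro a
    simp only [walkCount, Finset.sum_filter]
    rw [sum_supp T e]
    · apply Finset.sum_congr rfl
      intro b _
      simp [ih]
    · intro v hv
      rw [if_neg]
      exact fun h => hv (hH _ _ h).2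

lemma total_transfer {V : Type*} [Fintype V] {t : ℕ} (H : SimpleGraph V) (T : Finset V)
    (e : Fin t ≃ T) (hH : ∀ u v, H.Adj u v → u ∈ T ∧ v ∈ T) (k : ℕ) (hk : 1 ≤ k) :
    totalWalks H k = totalWalks (H.comap (fun a => (e a : V))) k := by
  obtain ⟨k, rfl⟩ : ∃ j, k = j + 1 := ⟨k - 1, by omega⟩
  unfold totalWalks
  rw [sum_supp T e]
  · exact Finset.sum_congr rfl fun a _ => walk_transfer H T e hH _ a
  · intro v hv
    simp only [walkCount]
    rw [Finset.filter_false_of_mem, Finset.sum_empty]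
    exact fun w _ h => hv (hH _ _ h).1

lemma adjAct_transfer {V : Type*} [Fintype V] {t : ℕ} (H : SimpleGraph V) (T : Finset V)
    (e : Fin t ≃ T) (hH : ∀ u v, H.Adj u v → u ∈ T ∧ v ∈ T) (x : V → ℝ) (a : Fin t) :
    adjAct H x (e a) = adjAct (H.comap (fun a => (e a : V))) (fun b => x (e b)) a := by
  unfold adjAct
  rw [sum_supp T e]
  · simp
  · intro v hv
    rw [if_neg]
    exact fun h => hv (hH _ _ h).2

lemma adjAct_out {V : Type*} [Fintype V] (H : SimpleGraph V) (T : Finset V)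
    (hH : ∀ u v, H.Adj u v → u ∈ T ∧ v ∈ T) (x : V → ℝ) (v : V) (hv : v ∉ T) :
    adjAct H x v = 0 := by
  unfold adjAct
  apply Finset.sum_eq_zero
  intro w _
  rw [if_neg]
  exact fun h => hv (hH _ _ h).1

lemma adjAct_sup {V : Type*} [Fintype V] (G H : SimpleGraph V)
    (hd : ∀ u v, H.Adj u v → ¬ G.Adj u v) (x : V → ℝ) (v : V) :
    adjAct (G ⊔ H) x v = adjAct G x v + adjAct H x v := by
  unfold adjAct
  rw [← Finset.sum_add_distrib]
  apply Finset.sum_congr rfl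
  intro w _
  by_cases h : H.Adj v w
  · simp [h, hd v w h]
  · simp [h]

lemma pos_of_connected {V : Type*} [Fintype V] (G H : SimpleGraph V) (hle : G ≤ H)
    (hG : G.Connected) (x : V → ℝ) (hx : x ≠ 0) (h0 : ∀ v, 0 ≤ x v) (ρ : ℝ)
    (he : ∀ v, adjAct H x v = ρ * x v) (v : V) : 0 < x v := by
  by_contra hc
  have hv : x v = 0 := le_antisymm (not_lt.1 hc) (h0 v)
  apply hx
  funext w
  have key : ∀ a b, G.Adj a b → x a = 0 → x b = 0 := by
    intro a b hab ha
    have h1 := he a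
    rw [ha, mul_zero] at h1
    unfold adjAct at h1
    rw [Finset.sum_eq_zero_iff_of_nonneg] at h1
    · simpa [hle hab] using h1 b (mem_univ b)
    · intro i _
      split_ifs
      · exact h0 i
      · exact le_rfl
  obtain ⟨p⟩ := hG.preconnected v w
  induction p with
  | nil => exact hv
  | cons hab p ih =>
    have hb := key _ _ hab hv
    exact ih (by rw [hb]; simp) hb

theorem stmt_1 (t : ℕ) :
    ∃ R : ℝ, ∀ (V : Type) [Fintype V], ∀ (G H₁ H₂ : SimpleGraph V) (S T : Finset V),
      G.Connected →
      1 ≤ S.card → S.card < Fintype.card V →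
      T.card = t →
      (∀ u ∈ T, u ∉ S) →
      (∀ u ∈ T, ∀ v, v ∉ S → ¬ G.Adj u v) →
      (∀ u ∈ T, ∀ s ∈ S, G.Adj u s) →
      (∀ u v, H₁.Adj u v → u ∈ T ∧ v ∈ T) →
      (∀ u v, H₂.Adj u v → u ∈ T ∧ v ∈ T) →
      spectralRad G > R →
      (∃ ℓ : ℕ, 1 ≤ ℓ ∧ totalWalks H₂ ℓ < totalWalks H₁ ℓ ∧
        ∀ i : ℕ, 1 ≤ i → i ≤ ℓ - 1 → totalWalks H₁ i = totalWalks H₂ i) →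
      spectralRad (G ⊔ H₂) < spectralRad (G ⊔ H₁) := by
  choose f hft hf using fun p : SimpleGraph (Fin t) × SimpleGraph (Fin t) =>
    small_compare p.1 p.2
  obtain ⟨R, hR⟩ := (Set.finite_range f).bddAbove
  refine ⟨R, ?_⟩
  intro V _ G H₁ H₂ S T hconn hS _ hT hTS hiso hjoin hH₁ hH₂ hρ hwalk
  have : Nonempty V := hconn.nonempty
  let e : Fin t ≃ T := (T.equivFinOfCardEq hT).symm
  let K₁ := H₁.comap (fun a => (e a : V))
  let K₂ := H₂.comap (fun a => (e a : V))
  have hfR : f (K₁, K₂) ≤ R := hR ⟨_, rfl⟩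
  have hdis : ∀ H : SimpleGraph V, (∀ u v, H.Adj u v → u ∈ T ∧ v ∈ T) →
      ∀ u v, H.Adj u v → ¬ G.Adj u v := fun H hH u v h =>
    hiso u (hH u v h).1 v (hTS v (hH u v h).2)
  obtain ⟨x, hx, hx0, hxe, -⟩ := perron (G ⊔ H₂)
  obtain ⟨-, -, -, -, hray⟩ := perron (G ⊔ H₁)
  have hmono := spectralRad_mono G (G ⊔ H₂) le_sup_left
  set ρ := spectralRad (G ⊔ H₂) with hρdef
  have hρf : ρ > f (K₁, K₂) := by linarith
  have hρt : (t : ℝ) < ρ := lt_of_le_of_lt (hft _) hρf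
  have hxpos := pos_of_connected G (G ⊔ H₂) le_sup_left hconn x hx hx0 ρ hxe
  set s := ∑ v ∈ S, x v with hs
  have hspos : 0 < s := Finset.sum_pos (fun v _ => hxpos v) (Finset.card_pos.1 hS)
  have hGT : ∀ (y : V → ℝ) (u : V), u ∈ T → adjAct G y u = ∑ v ∈ S, y v := by
    intro y u hu
    unfold adjAct
    rw [← Finset.sum_filter]
    apply Finset.sum_congr _ (fun _ _ => rfl)
    ext v
    simp only [Finset.mem_filter, Finset.mem_univ, true_and]
    exact ⟨fun h => by_contra fun hv => hiso u hu v hv h, fun h => hjoin u hu v h⟩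
  -- the solutions on `T`
  let z₂ : Fin t → ℝ := fun a => s⁻¹ * x (e a)
  have hz₂ : ∀ a, ρ * z₂ a = 1 + adjAct K₂ z₂ a := by
    intro a
    have h1 := hxe (e a)
    rw [adjAct_sup G H₂ (hdis H₂ hH₂), hGT x _ (e a).2, adjAct_transfer H₂ T e hH₂] at h1
    simp only [z₂]
    rw [adjAct_smul]
    have : ρ * (s⁻¹ * x (e a)) = s⁻¹ * (ρ * x (e a)) := by ring
    rw [this, ← h1, mul_add, ← hs, inv_mul_cancel₀ hspos.ne']
  obtain ⟨z₁, hz₁⟩ := sol_exists K₁ ρ hρt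
  have hlt : ∑ a, z₂ a < ∑ a, z₁ a := by
    refine hf (K₁, K₂) ?_ ρ hρf z₁ z₂ hz₁ hz₂
    obtain ⟨ℓ, h1, h2, h3⟩ := hwalk
    refine ⟨ℓ, h1, ?_, ?_⟩
    · simpa only [K₁, K₂, ← total_transfer H₁ T e hH₁ ℓ h1, ← total_transfer H₂ T e hH₂ ℓ h1]
        using h2
    · intro i hi hi'
      simpa only [K₁, K₂, ← total_transfer H₁ T e hH₁ i hi, ← total_transfer H₂ T e hH₂ i hi]
        using h3 i hi hi'
  let y : V → ℝ := fun v => if h : v ∈ T then s * z₁ (e.symm ⟨v, h⟩) else x v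
  have hyT : ∀ a, y (e a) = s * z₁ a := by
    intro a; simp [y]
  have hyN : ∀ v, v ∉ T → y v = x v := by
    intro v hv; simp [y, hv]
  have hyS : ∑ v ∈ S, y v = s :=
    Finset.sum_congr rfl fun v hv => hyN v fun h => hTS v h hv
  set D := s * (∑ a, z₁ a - ∑ a, z₂ a) with hD
  have hDpos : 0 < D := mul_pos hspos (by linarith)
  have hAy : ∀ v, adjAct (G ⊔ H₁) y v = ρ * y v + if v ∈ S then D else 0 := by
    intro v
    rw [adjAct_sup G H₁ (hdis H₁ hH₁)]
    by_cases hv : v ∈ T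
    · rw [hGT y v hv, hyS, if_neg (hTS v hv)]
      obtain ⟨a, rfl⟩ : ∃ a, (e a : V) = v := ⟨e.symm ⟨v, hv⟩, by simp⟩
      rw [adjAct_transfer H₁ T e hH₁, hyT]
      simp only [hyT]
      rw [adjAct_smul]
      have := hz₁ a
      have h2 : ρ * (s * z₁ a) = s * (ρ * z₁ a) := by ring
      rw [h2, this]; simp only [K₁]; ring
    · rw [adjAct_out H₁ T hH₁ y v hv, hyN v hv]
      have h1 := hxe v
      rw [adjAct_sup G H₂ (hdis H₂ hH₂), adjAct_out H₂ T hH₂ x v hv] at h1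
      have h2 : adjAct G y v = adjAct G x v + adjAct G (fun w => y w - x w) v := by
        rw [← adjAct_add]; congr 1; funext w; ring
      have h3 : adjAct G (fun w => y w - x w) v = if v ∈ S then D else 0 := by
        unfold adjAct
        rw [sum_supp T e]
        · split_ifs with hvS
          · rw [hD, mul_sub, Finset.mul_sum, Finset.mul_sum, ← Finset.sum_sub_distrib]
            apply Finset.sum_congr rfl
            intro a _
            rw [if_pos (hjoin _ (e a).2 v hvS).symm]
            simp only [z₂]
            rw [hyT]
            field_simp
          · apply Finset.sum_eq_zero
            intro a _
            rw [if_neg]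
            exact fun h => hiso _ (e a).2 v hvS h.symm
        · intro w hw
          simp [hyN w hw]
      rw [h2, h3]; linarith
  by_contra hc
  push Not at hc
  have h1 := hray y
  have h2 : ∑ v, y v * adjAct (G ⊔ H₁) y v = ρ * ∑ v, y v * y v + s * D := by
    simp only [hAy, mul_add, Finset.sum_add_distrib, Finset.mul_sum]
    congr 1
    · exact Finset.sum_congr rfl fun v _ => by ring
    · rw [← hyS, Finset.sum_mul]
      simp
  have h3 : 0 ≤ ∑ v, y v * y v := Finset.sum_nonneg fun v _ => mul_self_nonneg _
  have h4 := mul_le_mul_of_nonneg_right hc h3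
  have h5 := mul_pos hspos hDpos
  linarith
end

section
/- For an integer $r \ge 2$, let $K_{n_1, n_2, \ldots, n_r}$ be the complete $r$-partite graph of order $n$ with parts $V_1, V_2, \ldots, V_r$, where $n_i = |V_i| \ge 1$ for $1 \le i \le r$ and $\sum_{1 \le i \le r} n_i = n$. For each $1 \le i \le r$, let $H_i$ be a graph with vertex set $V(H_i) \subseteq V_i$ and maximum degree at most $\Delta$. Let $G$ be the graph obtained from $K_{n_1, n_2, \ldots, n_r}$ by adding the edges of $H_i$ inside $V_i$ for all $1 \le i \le r$, and let $\rho = \rho(G)$. If $\rho > \Delta$, then $\sum_{1 \le s \le r} \frac{1}{1 + \frac{n_s}{\rho} + \sum_{i=1}^{\infty} \frac{W^{i}(H_s)}{\rho^{i+1}}} = r - 1$ (in particular, each infinite series converges). -/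
open Finset Matrix SimpleGraph
open scoped Classical

/-- The value of the spectral radius is attained when it is positive. -/
theorem spectralRad_attained {V : Type*} [Fintype V] (G : SimpleGraph V)
    (h : 0 < spectralRad G) :
    ∃ x : V → ℝ, x ≠ 0 ∧ (G.adjMatrix ℝ) *ᵥ x = spectralRad G • x := by
  have hfin : {μ : ℝ | ∃ x : V → ℝ, x ≠ 0 ∧ (G.adjMatrix ℝ) *ᵥ x = μ • x}.Finite := by
    refine (Module.End.finite_hasEigenvalue (Matrix.toLin' (G.adjMatrix ℝ))).subset ?_
    rintro μ ⟨x, hx, hμ⟩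
    exact Module.End.hasEigenvalue_of_hasEigenvector
      (Module.End.hasEigenvector_iff.mpr
        ⟨Module.End.mem_eigenspace_iff.mpr (by simpa using hμ), hx⟩)
  have hne : {μ : ℝ | ∃ x : V → ℝ, x ≠ 0 ∧ (G.adjMatrix ℝ) *ᵥ x = μ • x}.Nonempty := by
    by_contra hcon
    rw [Set.not_nonempty_iff_eq_empty] at hcon
    rw [spectralRad, hcon, Real.sSup_empty] at h
    exact lt_irrefl _ h
  exact hne.csSup_mem hfin

theorem walkCount_le_pow {V : Type*} [Fintype V] (H : SimpleGraph V) (Δ : ℕ)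
    (hΔ : ∀ u, H.degree u ≤ Δ) (i : ℕ) (u : V) : walkCount H i u ≤ Δ ^ i := by
  induction i generalizing u with
  | zero => simp [walkCount]
  | succ i ih =>
    rw [walkCount]
    calc ∑ v ∈ Finset.univ.filter (fun v => H.Adj u v), walkCount H i v
        ≤ (Finset.univ.filter (fun v => H.Adj u v)).card • Δ ^ i :=
          Finset.sum_le_card_nsmul _ _ _ (fun v _ => ih v)
      _ ≤ Δ * Δ ^ i := by
          rw [smul_eq_mul]
          refine Nat.mul_le_mul_right _ ?_
          have := hΔ u
          rwa [← SimpleGraph.card_neighborFinset_eq_degree,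
            SimpleGraph.neighborFinset_eq_filter] at this
      _ = Δ ^ (i + 1) := by ring

theorem walk_summable {V : Type*} [Fintype V] (H : SimpleGraph V) (Δ : ℕ)
    (hΔ : ∀ u, H.degree u ≤ Δ) (ρ : ℝ) (hρ : (Δ : ℝ) < ρ) (u : V) :
    Summable (fun i : ℕ => (walkCount H i u : ℝ) / ρ ^ (i + 1)) := by
  have h0 : 0 < ρ := lt_of_le_of_lt (Nat.cast_nonneg _) hρ
  have hg : Summable (fun i : ℕ => ((Δ : ℝ) / ρ) ^ i * ρ⁻¹) :=
    (summable_geometric_of_lt_one (by positivity) ((div_lt_one h0).mpr hρ)).mul_right _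
  refine Summable.of_nonneg_of_le (fun i => by positivity) (fun i => ?_) hg
  have : (walkCount H i u : ℝ) ≤ (Δ : ℝ) ^ i := by
    exact_mod_cast walkCount_le_pow H Δ hΔ i u
  rw [div_pow, pow_succ, ← div_div, div_eq_mul_inv]
  gcongr

theorem kernel_trivial {V : Type*} [Fintype V] (H : SimpleGraph V) (Δ : ℕ)
    (hΔ : ∀ u, H.degree u ≤ Δ) (ρ : ℝ) (hρ : (Δ : ℝ) < ρ) (z : V → ℝ)
    (hz : ∀ u, ρ * z u = ∑ v ∈ Finset.univ.filter (fun v => H.Adj u v), z v) (u : V) :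
    z u = 0 := by
  have h0 : 0 < ρ := lt_of_le_of_lt (Nat.cast_nonneg _) hρ
  obtain ⟨m, -, hm⟩ := Finset.exists_max_image Finset.univ (fun v => |z v|) ⟨u, mem_univ u⟩
  have h1 : ρ * |z m| ≤ Δ * |z m| := by
    calc ρ * |z m| = |ρ * z m| := by rw [abs_mul, abs_of_pos h0]
      _ = |∑ v ∈ Finset.univ.filter (fun v => H.Adj m v), z v| := by rw [hz]
      _ ≤ ∑ v ∈ Finset.univ.filter (fun v => H.Adj m v), |z v| := Finset.abs_sum_le_sum_abs _ _
      _ ≤ (Finset.univ.filter (fun v => H.Adj m v)).card • |z m| :=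
          Finset.sum_le_card_nsmul _ _ _ (fun v _ => hm v (mem_univ v))
      _ ≤ Δ * |z m| := by
          rw [nsmul_eq_mul]
          refine mul_le_mul_of_nonneg_right ?_ (abs_nonneg _)
          have := hΔ m
          rw [← SimpleGraph.card_neighborFinset_eq_degree,
            SimpleGraph.neighborFinset_eq_filter] at this
          exact_mod_cast this
  have h2 : |z m| ≤ 0 := by
    by_contra hcon
    push Not at hcon
    nlinarith
  exact abs_nonpos_iff.mp ((hm u (mem_univ u)).trans h2)

/-- For a graph `G` obtained from a complete `r`-partite graph (parts given
by `p : V → Fin r`, all nonempty) by embedding, inside each part `s`, the edges of a graph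
`H_s` (packaged together as `H`, whose edges lie within parts) of maximum degree at most `Δ`:
if `ρ = ρ(G) > Δ` then each series `∑_{i≥1} W^i(H_s)/ρ^{i+1}` converges and
`∑_s 1/(1 + n_s/ρ + ∑_{i≥1} W^i(H_s)/ρ^{i+1}) = r - 1`. -/
theorem stmt_2 {V : Type*} [Fintype V] (r : ℕ) (hr : 2 ≤ r) (p : V → Fin r)
    (hparts : ∀ i : Fin r, 1 ≤ (Finset.univ.filter (fun v => p v = i)).card)
    (Δ : ℕ) (H : SimpleGraph V)
    (hHin : ∀ u v, H.Adj u v → p u = p v)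
    (hΔ : ∀ u, H.degree u ≤ Δ)
    (G : SimpleGraph V)
    (hG : ∀ u v, G.Adj u v ↔ (p u ≠ p v ∨ H.Adj u v))
    (hρ : spectralRad G > Δ) :
    (∀ s : Fin r, Summable (fun i : ℕ =>
      (∑ u ∈ Finset.univ.filter (fun v => p v = s), (walkCount H (i + 1) u : ℝ)) /
        spectralRad G ^ (i + 2))) ∧
    ∑ s : Fin r,
      (1 + ((Finset.univ.filter (fun v => p v = s)).card : ℝ) / spectralRad G +
        ∑' i : ℕ, (∑ u ∈ Finset.univ.filter (fun v => p v = s), (walkCount H (i + 1) u : ℝ)) /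
          spectralRad G ^ (i + 2))⁻¹ = (r : ℝ) - 1 := by
  have hΔ0 : (0 : ℝ) ≤ Δ := Nat.cast_nonneg _
  have h0 : 0 < spectralRad G := lt_of_le_of_lt hΔ0 hρ
  obtain ⟨x, hx0, hx⟩ := spectralRad_attained G h0
  generalize spectralRad G = ρ at *
  have hsum := walk_summable H Δ hΔ ρ hρ
  have hsum1 : ∀ u, Summable (fun i : ℕ => (walkCount H (i + 1) u : ℝ) / ρ ^ (i + 2)) :=
    fun u => (summable_nat_add_iff 1).mpr (hsum u)
  have hS : ∀ s : Fin r, Summable (fun i : ℕ =>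
      (∑ u ∈ Finset.univ.filter (fun v => p v = s), (walkCount H (i + 1) u : ℝ)) /
        ρ ^ (i + 2)) := by
    intro s
    simp_rw [Finset.sum_div]
    exact summable_sum (fun u _ => hsum1 u)
  refine ⟨hS, ?_⟩
  obtain ⟨y, hy⟩ : ∃ y : V → ℝ, ∀ u, y u = ∑' i : ℕ, (walkCount H i u : ℝ) / ρ ^ (i + 1) :=
    ⟨_, fun _ => rfl⟩
  have hy0 : ∀ u, 0 ≤ y u := fun u => by
    rw [hy]; exact tsum_nonneg (fun i => by positivity)
  have hy1 : ∀ u, y u = 1 / ρ + ∑' i : ℕ, (walkCount H (i + 1) u : ℝ) / ρ ^ (i + 2) := by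
    intro u
    rw [hy, (hsum u).tsum_eq_zero_add]
    simp [walkCount]
  have hyrec : ∀ u, ρ * y u = 1 + ∑ v ∈ Finset.univ.filter (fun v => H.Adj u v), y v := by
    intro u
    have e : ∑ v ∈ Finset.univ.filter (fun v => H.Adj u v), y v
        = ρ * ∑' i : ℕ, (walkCount H (i + 1) u : ℝ) / ρ ^ (i + 2) := by
      simp_rw [hy]
      rw [← Summable.tsum_finsetSum (fun v _ => hsum v), ← tsum_mul_left]
      refine tsum_congr (fun i => ?_)
      rw [walkCount, ← Finset.sum_div]
      push_cast
      field_simp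
      ring
    rw [e, hy1 u]
    field_simp
  obtain ⟨Y, hY⟩ : ∃ Y : Fin r → ℝ,
      ∀ s, Y s = ∑ u ∈ Finset.univ.filter (fun v => p v = s), y u := ⟨_, fun _ => rfl⟩
  have hY0 : ∀ s, 0 ≤ Y s := fun s => by
    rw [hY]; exact Finset.sum_nonneg (fun u _ => hy0 u)
  have hYe : ∀ s : Fin r, 1 + ((Finset.univ.filter (fun v => p v = s)).card : ℝ) / ρ +
        ∑' i : ℕ, (∑ u ∈ Finset.univ.filter (fun v => p v = s), (walkCount H (i + 1) u : ℝ)) /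
          ρ ^ (i + 2) = 1 + Y s := by
    intro s
    simp_rw [Finset.sum_div]
    rw [Summable.tsum_finsetSum (fun u _ => hsum1 u), hY]
    simp_rw [hy1]
    rw [Finset.sum_add_distrib, Finset.sum_const, nsmul_eq_mul]
    ring
  simp_rw [hYe]
  obtain ⟨S, hSd⟩ : ∃ S : Fin r → ℝ,
      ∀ s, S s = ∑ u ∈ Finset.univ.filter (fun v => p v = s), x u := ⟨_, fun _ => rfl⟩
  obtain ⟨T, hT⟩ : ∃ T : ℝ, T = ∑ u, x u := ⟨_, rfl⟩
  have hTS : ∑ s, S s = T := by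
    simp_rw [hSd, hT]
    exact Finset.sum_fiberwise _ _ _
  have hxrec : ∀ u, ρ * x u = T - S (p u) +
      ∑ v ∈ Finset.univ.filter (fun v => H.Adj u v), x v := by
    intro u
    have h1 := congrFun hx u
    rw [SimpleGraph.adjMatrix_mulVec_apply, SimpleGraph.neighborFinset_eq_filter] at h1
    simp only [Pi.smul_apply, smul_eq_mul] at h1
    rw [← h1, hT, hSd]
    simp_rw [Finset.sum_filter]
    rw [← Finset.sum_sub_distrib, ← Finset.sum_add_distrib]
    refine Finset.sum_congr rfl (fun v _ => ?_)
    have h2 := hG u v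
    have h3 := hHin u v
    by_cases ha : H.Adj u v
    · have := h3 ha
      simp [h2, ha, this]
    · by_cases hp : p u = p v
      · simp [h2, ha, hp]
      · simp [h2, ha, hp, Ne.symm hp]
  have hxy : ∀ u, x u = (T - S (p u)) * y u := by
    intro u
    have := kernel_trivial H Δ hΔ ρ hρ (fun u => x u - (T - S (p u)) * y u) (fun u => by
      have e : ∑ v ∈ Finset.univ.filter (fun v => H.Adj u v), (T - S (p v)) * y v
          = (T - S (p u)) * ∑ v ∈ Finset.univ.filter (fun v => H.Adj u v), y v := by
        rw [Finset.mul_sum]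
        refine Finset.sum_congr rfl (fun v hv => ?_)
        rw [hHin u v (Finset.mem_filter.mp hv).2]
      rw [Finset.sum_sub_distrib, e]
      linear_combination hxrec u - (T - S (p u)) * hyrec u) u
    exact sub_eq_zero.mp this
  have hSY : ∀ s, S s = (T - S s) * Y s := by
    intro s
    rw [hY, Finset.mul_sum]
    conv_lhs => rw [hSd]
    refine Finset.sum_congr rfl (fun u hu => ?_)
    rw [hxy u, (Finset.mem_filter.mp hu).2]
  have hpos : ∀ s, 0 < 1 + Y s := fun s => by linarith [hY0 s]
  have hT0 : T ≠ 0 := by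
    intro hT0
    apply hx0
    have hSz : ∀ s, S s = 0 := fun s => by
      have h1 : S s * (1 + Y s) = 0 := by
        have := hSY s
        rw [hT0] at this
        linear_combination this
      exact (mul_eq_zero.mp h1).resolve_right (hpos s).ne'
    funext u
    rw [hxy u, hSz, hT0]
    simp
  have hinv : ∀ s, T * (1 + Y s)⁻¹ = T - S s := fun s => by
    rw [← div_eq_mul_inv, div_eq_iff (hpos s).ne']
    linear_combination hSY s
  have hfinal : T * ∑ s, (1 + Y s)⁻¹ = T * ((r : ℝ) - 1) := by
    rw [Finset.mul_sum]
    simp_rw [hinv]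
    rw [Finset.sum_sub_distrib, hTS]
    simp
    ring
  exact mul_left_cancel₀ hT0 hfinal
end

section
/- Let $G$ be a connected graph of order $n$, let $S \subseteq V(G)$ with $1 \le |S| < n$, and let $H$ be a connected component of $G - S$ with maximum degree at most $\Delta$ such that every vertex of $H$ is adjacent in $G$ to every vertex of $S$. Let $\rho = \rho(G)$ and let $\mathbf{x} = (x_v)_{v \in V(G)}$ be the Perron vector of $G$ normalized so that $\sum_{v \in S} x_v = \rho$. If $\rho > \Delta$, then for every vertex $u$ of $H$, $x_u = 1 + \sum_{i=1}^{\infty} \frac{w^{i}_H(u)}{\rho^{i}}$ (in particular, this infinite series converges). -/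
open Finset Matrix SimpleGraph
open scoped Classical

/-- (Lemma on entries of the Perron vector.) If `H` (vertex set `T`) is a
connected component of `G - S` of maximum degree at most `Δ`, completely joined to `S`, and
the Perron vector `x` of `G` is normalized by `∑_{v ∈ S} x_v = ρ(G)`, then for `ρ(G) > Δ`
every `u ∈ T` satisfies `x_u = 1 + ∑_{i≥1} w^i_H(u)/ρ^i` (a convergent series). -/
theorem stmt_3 {V : Type*} [Fintype V] (G H : SimpleGraph V) (S T : Finset V) (Δ : ℕ)
    (x : V → ℝ)
    (hconn : G.Connected) (hS1 : 1 ≤ S.card) (hS2 : S.card < Fintype.card V)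
    (hH : ∀ u v, H.Adj u v ↔ (u ∈ T ∧ v ∈ T ∧ G.Adj u v))
    (hTS : ∀ u ∈ T, u ∉ S)
    (hclosed : ∀ u ∈ T, ∀ v, G.Adj u v → v ∈ S ∨ v ∈ T)
    (hHconn : (G.induce (T : Set V)).Connected)
    (hΔ : ∀ u, H.degree u ≤ Δ)
    (hfull : ∀ u ∈ T, ∀ s ∈ S, G.Adj u s)
    (hρΔ : spectralRad G > Δ)
    (hx : ∀ v, 0 ≤ x v) (hx0 : x ≠ 0)
    (heig : G.adjMatrix ℝ *ᵥ x = spectralRad G • x)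
    (hnorm : ∑ v ∈ S, x v = spectralRad G) :
    ∀ u ∈ T,
      Summable (fun i : ℕ => (walkCount H (i + 1) u : ℝ) / spectralRad G ^ (i + 1)) ∧
      x u = 1 + ∑' i : ℕ, (walkCount H (i + 1) u : ℝ) / spectralRad G ^ (i + 1) := by
  intro u hu
  set r := spectralRad G with hr
  have hr0 : 0 < r := lt_of_le_of_lt (Nat.cast_nonneg Δ) hρΔ
  -- eigenvalue equation on `T`
  have key : ∀ u ∈ T, x u = 1 + (∑ v ∈ Finset.univ.filter (fun v => H.Adj u v), x v) / r := by
    intro u hu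
    have h1 := congrFun heig u
    rw [SimpleGraph.adjMatrix_mulVec_apply] at h1
    have h2 : G.neighborFinset u = S ∪ Finset.univ.filter (fun v => H.Adj u v) := by
      ext v
      simp only [SimpleGraph.mem_neighborFinset, Finset.mem_union, Finset.mem_filter,
        Finset.mem_univ, true_and, hH]
      constructor
      · intro h
        rcases hclosed u hu v h with h' | h'
        · exact Or.inl h'
        · exact Or.inr ⟨hu, h', h⟩
      · rintro (h | h)
        · exact hfull u hu v h
        · exact h.2.2
    have h3 : Disjoint S (Finset.univ.filter (fun v => H.Adj u v)) := by
      rw [Finset.disjoint_left]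
      intro v hv hv'
      simp only [Finset.mem_filter, Finset.mem_univ, true_and, hH] at hv'
      exact hTS v hv'.2.1 hv
    rw [h2, Finset.sum_union h3, hnorm] at h1
    simp only [Pi.smul_apply, smul_eq_mul] at h1
    field_simp
    linarith
  have hrec : ∀ k u, ∑ i ∈ Finset.range (k + 1), (walkCount H i u : ℝ) / r ^ i
      = 1 + (∑ v ∈ Finset.univ.filter (fun v => H.Adj u v),
          ∑ i ∈ Finset.range k, (walkCount H i v : ℝ) / r ^ i) / r := by
    intro k u
    rw [Finset.sum_range_succ', Finset.sum_comm, Finset.sum_div, add_comm]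
    congr 1
    · simp [walkCount]
    · refine Finset.sum_congr rfl fun i _ => ?_
      rw [← Finset.sum_div, div_div, ← pow_succ]
      simp [walkCount]
  have hbound : ∀ k, ∀ u ∈ T,
      |x u - ∑ i ∈ Finset.range k, (walkCount H i u : ℝ) / r ^ i|
        ≤ (∑ v, x v) * ((Δ : ℝ) / r) ^ k := by
    intro k
    induction k with
    | zero =>
      intro u _
      simp only [Finset.range_zero, Finset.sum_empty, sub_zero, pow_zero, mul_one]
      rw [abs_of_nonneg (hx u)]
      exact Finset.single_le_sum (fun v _ => hx v) (Finset.mem_univ u)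
    | succ k ih =>
      intro u hu
      rw [hrec, key u hu, add_sub_add_left_eq_sub, ← sub_div, ← Finset.sum_sub_distrib, abs_div,
        abs_of_pos hr0, div_le_iff₀ hr0]
      have hB : 0 ≤ (∑ v, x v) * ((Δ : ℝ) / r) ^ k :=
        mul_nonneg (Finset.sum_nonneg fun v _ => hx v) (by positivity)
      have hcard : ((Finset.univ.filter (fun v => H.Adj u v)).card : ℝ) ≤ Δ := by
        have := hΔ u
        rw [← SimpleGraph.card_neighborFinset_eq_degree, SimpleGraph.neighborFinset_eq_filter]
          at this
        exact_mod_cast this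
      calc _ ≤ ∑ v ∈ Finset.univ.filter (fun v => H.Adj u v),
            |x v - ∑ i ∈ Finset.range k, (walkCount H i v : ℝ) / r ^ i| :=
            Finset.abs_sum_le_sum_abs _ _
        _ ≤ ∑ v ∈ Finset.univ.filter (fun v => H.Adj u v),
            (∑ v, x v) * ((Δ : ℝ) / r) ^ k := by
            refine Finset.sum_le_sum fun v hv => ih v ?_
            simp only [Finset.mem_filter, Finset.mem_univ, true_and, hH] at hv
            exact hv.2.1
        _ ≤ Δ * ((∑ v, x v) * ((Δ : ℝ) / r) ^ k) := by
            rw [Finset.sum_const, nsmul_eq_mul]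
            exact mul_le_mul_of_nonneg_right hcard hB
        _ = _ := by
            rw [pow_succ]
            field_simp
  have hsum : HasSum (fun i : ℕ => (walkCount H i u : ℝ) / r ^ i) (x u) := by
    rw [hasSum_iff_tendsto_nat_of_nonneg (fun i => by positivity)]
    rw [tendsto_iff_dist_tendsto_zero]
    refine squeeze_zero (fun _ => dist_nonneg)
      (g := fun k => (∑ v, x v) * ((Δ : ℝ) / r) ^ k) (fun k => ?_) ?_
    · rw [Real.dist_eq, abs_sub_comm]
      exact hbound k u hu
    · have := (tendsto_pow_atTop_nhds_zero_of_lt_one (r := (Δ : ℝ) / r) (by positivity)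
        ((div_lt_one hr0).2 hρΔ)).const_mul (∑ v, x v)
      simpa using this
  refine ⟨(summable_nat_add_iff 1).2 hsum.summable, ?_⟩
  rw [← hsum.tsum_eq, hsum.summable.tsum_eq_zero_add]
  simp [walkCount]
end

section
/- Let $G$ be a connected graph of order $n$, let $S \subseteq V(G)$ with $1 \le |S| < n$, and let $H$ be a connected component of $G - S$ such that every vertex of $H$ is adjacent in $G$ to every vertex of $S$. Let $\rho = \rho(G)$ and let $\mathbf{x} = (x_v)_{v \in V(G)}$ be the Perron vector of $G$ normalized so that $\sum_{v \in S} x_v = \rho$. Then for every vertex $u$ of $H$ and every integer $\ell \ge 1$, $x_u \ge 1 + \sum_{i=1}^{\ell} \frac{w^{i}_H(u)}{\rho^{i}}$. -/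
open Finset Matrix SimpleGraph
open scoped Classical

/-- (Claim 1.) With `H` a connected component of `G - S` completely joined
to `S` and `x` the Perron vector of `G` normalized by `∑_{v ∈ S} x_v = ρ(G)`, every vertex
`u` of `H` satisfies `x_u ≥ 1 + ∑_{i=1}^ℓ w^i_H(u)/ρ^i` for every `ℓ ≥ 1`. -/
theorem stmt_4 {V : Type*} [Fintype V] (G H : SimpleGraph V) (S T : Finset V)
    (x : V → ℝ)
    (hconn : G.Connected) (hS1 : 1 ≤ S.card) (hS2 : S.card < Fintype.card V)
    (hH : ∀ u v, H.Adj u v ↔ (u ∈ T ∧ v ∈ T ∧ G.Adj u v))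
    (hTS : ∀ u ∈ T, u ∉ S)
    (hclosed : ∀ u ∈ T, ∀ v, G.Adj u v → v ∈ S ∨ v ∈ T)
    (hHconn : (G.induce (T : Set V)).Connected)
    (hfull : ∀ u ∈ T, ∀ s ∈ S, G.Adj u s)
    (hx : ∀ v, 0 ≤ x v) (hx0 : x ≠ 0)
    (heig : G.adjMatrix ℝ *ᵥ x = spectralRad G • x)
    (hnorm : ∑ v ∈ S, x v = spectralRad G) :
    ∀ u ∈ T, ∀ ℓ : ℕ, 1 ≤ ℓ →
      1 + ∑ i ∈ Finset.range ℓ, (walkCount H (i + 1) u : ℝ) / spectralRad G ^ (i + 1)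
        ≤ x u := by
  intro u hu ℓ _
  set ρ := spectralRad G with hρ
  have heig' : ∀ v, ∑ w ∈ Finset.univ.filter (fun w => G.Adj v w), x w = ρ * x v := by
    intro v
    have h := congrFun heig v
    simp only [Matrix.mulVec, dotProduct, adjMatrix_apply, Pi.smul_apply, smul_eq_mul] at h
    rw [← h, Finset.sum_filter]
    exact Finset.sum_congr rfl (fun w _ => by split_ifs <;> simp)
  have hρ0 : 0 ≤ ρ := hnorm ▸ Finset.sum_nonneg (fun v _ => hx v)
  have hρpos : 0 < ρ := by
    rcases hρ0.lt_or_eq with h | h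
    · exact h
    exfalso
    obtain ⟨s, hs⟩ := Finset.card_pos.mp hS1
    haveI : Nontrivial V := ⟨u, s, fun e => hTS u hu (e ▸ hs)⟩
    apply hx0
    funext v
    obtain ⟨w, hw⟩ := hconn.preconnected.exists_adj_of_nontrivial v
    have h1 := heig' w
    rw [← h, zero_mul, Finset.sum_eq_zero_iff_of_nonneg (fun v _ => hx v)] at h1
    exact h1 v (by simpa using hw.symm)
  have hrec : ∀ v ∈ T, x v = 1 + (∑ w ∈ Finset.univ.filter (fun w => H.Adj v w), x w) / ρ := by
    intro v hv
    have h1 := heig' v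
    have h2 : Finset.univ.filter (fun w => G.Adj v w)
        = S ∪ Finset.univ.filter (fun w => H.Adj v w) := by
      ext w
      simp only [Finset.mem_filter, Finset.mem_univ, true_and, Finset.mem_union, hH]
      constructor
      · intro h
        rcases hclosed v hv w h with h' | h'
        · exact Or.inl h'
        · exact Or.inr ⟨hv, h', h⟩
      · rintro (h | h)
        · exact hfull v hv w h
        · exact h.2.2
    have h3 : Disjoint S (Finset.univ.filter (fun w => H.Adj v w)) := by
      rw [Finset.disjoint_right]
      intro w hw
      simp only [Finset.mem_filter, Finset.mem_univ, true_and, hH] at hw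
      exact hTS w hw.2.1
    rw [h2, Finset.sum_union h3, hnorm] at h1
    field_simp
    linarith
  have key : ∀ m : ℕ, ∀ v ∈ T,
      ∑ i ∈ Finset.range (m + 1), (walkCount H i v : ℝ) / ρ ^ i ≤ x v := by
    intro m
    induction m with
    | zero =>
      intro v hv
      rw [hrec v hv]
      have : 0 ≤ (∑ w ∈ Finset.univ.filter (fun w => H.Adj v w), x w) / ρ :=
        div_nonneg (Finset.sum_nonneg (fun w _ => hx w)) hρ0
      simpa [walkCount] using this
    | succ m ih =>
      intro v hv
      have h1 : ∑ i ∈ Finset.range (m + 1), (walkCount H (i + 1) v : ℝ) / ρ ^ (i + 1)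
          = (∑ w ∈ Finset.univ.filter (fun w => H.Adj v w),
            ∑ i ∈ Finset.range (m + 1), (walkCount H i w : ℝ) / ρ ^ i) / ρ := by
        rw [Finset.sum_comm, Finset.sum_div]
        refine Finset.sum_congr rfl (fun i _ => ?_)
        rw [← Finset.sum_div, div_div, ← pow_succ]
        simp only [walkCount, Nat.cast_sum]
      rw [Finset.sum_range_succ', h1, hrec v hv, add_comm]
      simp only [walkCount, Nat.cast_one, pow_zero, div_one]
      gcongr with w hw
      simp only [Finset.mem_filter, Finset.mem_univ, true_and, hH] at hw
      exact ih w hw.2.1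
  have h := key ℓ u hu
  rw [Finset.sum_range_succ'] at h
  simp only [walkCount, Nat.cast_one, pow_zero, div_one] at h ⊢
  linarith
end

section
/- Let $G$ be a connected graph of order $n$, let $S \subseteq V(G)$ with $1 \le |S| < n$, and let $H$ be a connected component of $G - S$ with maximum degree at most $\Delta$ such that every vertex of $H$ is adjacent in $G$ to every vertex of $S$. Let $\rho = \rho(G)$ and let $\mathbf{x} = (x_v)_{v \in V(G)}$ be the Perron vector of $G$ normalized so that $\sum_{v \in S} x_v = \rho$. If $\rho > \Delta$, then for every vertex $u$ of $H$ and every integer $\ell \ge 1$, $x_u \le \left(1 + \sum_{i=1}^{\ell} \frac{w^{i}_H(u)}{\rho^{i}}\right) + \frac{\Delta}{\rho - \Delta} \cdot \frac{w^{\ell}_H(u)}{\rho^{\ell}}$. -/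
open Finset Matrix SimpleGraph
open scoped Classical

/-- (Claim 2.) With `H` a connected component of `G - S` of maximum degree
at most `Δ`, completely joined to `S`, and `x` the Perron vector of `G` normalized by
`∑_{v ∈ S} x_v = ρ(G)`: if `ρ(G) > Δ` then for every vertex `u` of `H` and every `ℓ ≥ 1`,
`x_u ≤ (1 + ∑_{i=1}^ℓ w^i_H(u)/ρ^i) + (Δ/(ρ-Δ)) · w^ℓ_H(u)/ρ^ℓ`. -/
theorem stmt_5 {V : Type*} [Fintype V] (G H : SimpleGraph V) (S T : Finset V) (Δ : ℕ)
    (x : V → ℝ)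
    (hconn : G.Connected) (hS1 : 1 ≤ S.card) (hS2 : S.card < Fintype.card V)
    (hH : ∀ u v, H.Adj u v ↔ (u ∈ T ∧ v ∈ T ∧ G.Adj u v))
    (hTS : ∀ u ∈ T, u ∉ S)
    (hclosed : ∀ u ∈ T, ∀ v, G.Adj u v → v ∈ S ∨ v ∈ T)
    (hHconn : (G.induce (T : Set V)).Connected)
    (hΔ : ∀ u, H.degree u ≤ Δ)
    (hfull : ∀ u ∈ T, ∀ s ∈ S, G.Adj u s)
    (hρΔ : spectralRad G > Δ)
    (hx : ∀ v, 0 ≤ x v) (hx0 : x ≠ 0)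
    (heig : G.adjMatrix ℝ *ᵥ x = spectralRad G • x)
    (hnorm : ∑ v ∈ S, x v = spectralRad G) :
    ∀ u ∈ T, ∀ ℓ : ℕ, 1 ≤ ℓ →
      x u ≤ (1 + ∑ i ∈ Finset.range ℓ, (walkCount H (i + 1) u : ℝ) / spectralRad G ^ (i + 1))
        + ((Δ : ℝ) / (spectralRad G - Δ)) * ((walkCount H ℓ u : ℝ) / spectralRad G ^ ℓ) := by
  have hρ : 0 < spectralRad G := lt_of_le_of_lt (Nat.cast_nonneg Δ) hρΔ
  generalize hr : spectralRad G = ρ at *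
  -- the eigenvalue equation on `T`
  have key : ∀ u ∈ T, x u = 1 + (∑ v ∈ Finset.univ.filter (fun v => H.Adj u v), x v) / ρ := by
    intro u hu
    have h1 := congrFun heig u
    rw [SimpleGraph.adjMatrix_mulVec_apply] at h1
    have h2 : G.neighborFinset u = S ∪ Finset.univ.filter (fun v => H.Adj u v) := by
      ext v
      simp only [SimpleGraph.mem_neighborFinset, Finset.mem_union, Finset.mem_filter,
        Finset.mem_univ, true_and, hH]
      constructor
      · intro h
        rcases hclosed u hu v h with h' | h'
        · exact Or.inl h'
        · exact Or.inr ⟨hu, h', h⟩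
      · rintro (h | h)
        · exact hfull u hu v h
        · exact h.2.2
    have h3 : Disjoint S (Finset.univ.filter (fun v => H.Adj u v)) := by
      rw [Finset.disjoint_left]
      intro v hv hv'
      simp only [Finset.mem_filter, Finset.mem_univ, true_and, hH] at hv'
      exact hTS v hv'.2.1 hv
    rw [h2, Finset.sum_union h3, hnorm] at h1
    simp only [Pi.smul_apply, smul_eq_mul] at h1
    field_simp
    linarith
  have hd : 0 < ρ - Δ := by linarith
  -- the uniform bound
  have base : ∀ u ∈ T, x u ≤ 1 + (Δ : ℝ) / (ρ - Δ) := by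
    intro u hu
    obtain ⟨m, hm, hmax⟩ := Finset.exists_max_image T x ⟨u, hu⟩
    refine (hmax u hu).trans ?_
    have h1 := key m hm
    have h2 : ∑ v ∈ Finset.univ.filter (fun v => H.Adj m v), x v ≤ Δ * x m := by
      calc ∑ v ∈ Finset.univ.filter (fun v => H.Adj m v), x v
          ≤ ∑ v ∈ Finset.univ.filter (fun v => H.Adj m v), x m := by
            apply Finset.sum_le_sum
            intro v hv
            simp only [Finset.mem_filter, Finset.mem_univ, true_and, hH] at hv
            exact hmax v hv.2.1
        _ = (H.degree m : ℝ) * x m := by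
            rw [Finset.sum_const, nsmul_eq_mul, ← SimpleGraph.card_neighborFinset_eq_degree,
              SimpleGraph.neighborFinset_eq_filter]
        _ ≤ Δ * x m := by
            apply mul_le_mul_of_nonneg_right _ (hx m)
            exact_mod_cast hΔ m
    have h3 : ρ * x m = ρ + ∑ v ∈ Finset.univ.filter (fun v => H.Adj m v), x v := by
      rw [h1]
      field_simp
    have h4 : 1 + (Δ : ℝ) / (ρ - Δ) = ρ / (ρ - Δ) := by
      field_simp
      ring
    rw [h4, le_div_iff₀ hd]
    linarith
  -- the induction
  have main : ∀ ℓ : ℕ, ∀ u ∈ T, x u ≤ ∑ i ∈ Finset.range (ℓ + 1), (walkCount H i u : ℝ) / ρ ^ i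
      + ((Δ : ℝ) / (ρ - Δ)) * ((walkCount H ℓ u : ℝ) / ρ ^ ℓ) := by
    intro ℓ
    induction ℓ with
    | zero =>
      intro u hu
      simpa [walkCount] using base u hu
    | succ ℓ ih =>
      intro u hu
      have step : ∀ k : ℕ, (walkCount H (k + 1) u : ℝ) / ρ ^ (k + 1)
          = (∑ v ∈ Finset.univ.filter (fun v => H.Adj u v),
              (walkCount H k v : ℝ) / ρ ^ k) / ρ := by
        intro k
        rw [walkCount, ← Finset.sum_div, div_div, pow_succ]
        push_cast
        rfl
      rw [key u hu, Finset.sum_range_succ', step ℓ]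
      simp only [step]
      have h0 : (walkCount H 0 u : ℝ) / ρ ^ 0 = 1 := by simp [walkCount]
      rw [h0, ← Finset.sum_div, Finset.sum_comm, mul_div_assoc', Finset.mul_sum]
      have h5 : ∑ v ∈ Finset.univ.filter (fun v => H.Adj u v), x v ≤
          ∑ v ∈ Finset.univ.filter (fun v => H.Adj u v),
            (∑ i ∈ Finset.range (ℓ + 1), (walkCount H i v : ℝ) / ρ ^ i
              + ((Δ : ℝ) / (ρ - Δ)) * ((walkCount H ℓ v : ℝ) / ρ ^ ℓ)) := by
        apply Finset.sum_le_sum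
        intro v hv
        simp only [Finset.mem_filter, Finset.mem_univ, true_and, hH] at hv
        exact ih v hv.2.1
      rw [Finset.sum_add_distrib] at h5
      have h6 := div_le_div_of_nonneg_right h5 hρ.le
      rw [add_div] at h6
      linarith
  intro u hu ℓ _
  have h := main ℓ u hu
  rw [Finset.sum_range_succ'] at h
  have h0 : (walkCount H 0 u : ℝ) / ρ ^ 0 = 1 := by simp [walkCount]
  rw [h0] at h
  linarith
end

section
/- Let $G$ be a connected graph of order $n$, let $S \subseteq V(G)$ with $1 \le |S| < n$, and let $H$ be a connected component of $G - S$ with maximum degree at most $\Delta$ such that every vertex of $H$ is adjacent in $G$ to every vertex of $S$. Let $\rho = \rho(G)$ and let $\mathbf{x} = (x_v)_{v \in V(G)}$ be the Perron vector of $G$ normalized so that $\sum_{v \in S} x_v = \rho$. If $\rho > \Delta$, then for every vertex $u$ of $H$, $x_u \le \frac{\rho}{\rho - \Delta}$. -/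
open Finset Matrix SimpleGraph
open scoped Classical

/-- With `H` a connected component of `G - S` of maximum degree at most `Δ`,
completely joined to `S`, and `x` the Perron vector of `G` normalized by
`∑_{v ∈ S} x_v = ρ(G)`: if `ρ(G) > Δ` then `x_u ≤ ρ/(ρ - Δ)` for every vertex `u` of `H`. -/
theorem stmt_6 {V : Type*} [Fintype V] (G H : SimpleGraph V) (S T : Finset V) (Δ : ℕ)
    (x : V → ℝ)
    (hconn : G.Connected) (hS1 : 1 ≤ S.card) (hS2 : S.card < Fintype.card V)
    (hH : ∀ u v, H.Adj u v ↔ (u ∈ T ∧ v ∈ T ∧ G.Adj u v))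
    (hTS : ∀ u ∈ T, u ∉ S)
    (hclosed : ∀ u ∈ T, ∀ v, G.Adj u v → v ∈ S ∨ v ∈ T)
    (hHconn : (G.induce (T : Set V)).Connected)
    (hΔ : ∀ u, H.degree u ≤ Δ)
    (hfull : ∀ u ∈ T, ∀ s ∈ S, G.Adj u s)
    (hρΔ : spectralRad G > Δ)
    (hx : ∀ v, 0 ≤ x v) (hx0 : x ≠ 0)
    (heig : G.adjMatrix ℝ *ᵥ x = spectralRad G • x)
    (hnorm : ∑ v ∈ S, x v = spectralRad G) :
    ∀ u ∈ T, x u ≤ spectralRad G / (spectralRad G - Δ) := by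
  intro u hu
  obtain ⟨w, hw, hmax⟩ := T.exists_max_image x ⟨u, hu⟩
  have h1 : ∑ v ∈ G.neighborFinset w, x v = spectralRad G * x w := by
    have := congrFun heig w
    rw [SimpleGraph.adjMatrix_mulVec_apply] at this
    simpa using this
  have hN : G.neighborFinset w = S ∪ H.neighborFinset w := by
    ext v
    simp only [SimpleGraph.mem_neighborFinset, Finset.mem_union, hH]
    constructor
    · intro h
      rcases hclosed w hw v h with h' | h'
      · exact Or.inl h'
      · exact Or.inr ⟨hw, h', h⟩
    · rintro (h | h)
      · exact hfull w hw v h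
      · exact h.2.2
  have hD : Disjoint S (H.neighborFinset w) := by
    rw [Finset.disjoint_left]
    intro v hv hv'
    rw [SimpleGraph.mem_neighborFinset, hH] at hv'
    exact hTS v hv'.2.1 hv
  rw [hN, Finset.sum_union hD, hnorm] at h1
  have h2 : ∑ v ∈ H.neighborFinset w, x v ≤ (H.degree w : ℝ) * x w := by
    have := Finset.sum_le_card_nsmul (H.neighborFinset w) x (x w) (by
      intro v hv
      rw [SimpleGraph.mem_neighborFinset, hH] at hv
      exact hmax v hv.2.1)
    simpa using this
  have h3 : (H.degree w : ℝ) * x w ≤ Δ * x w :=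
    mul_le_mul_of_nonneg_right (by exact_mod_cast hΔ w) (hx w)
  refine (hmax u hu).trans ?_
  rw [le_div_iff₀ (by linarith)]
  linarith
end

section
/- Let $m \ge 1$ be an integer with $m \ne 3$, and let $G$ be a graph with exactly $m$ edges and no isolated vertices. Then $\sum_{v \in V(G)} d_G(v)^2 \le m^2 + m$, with equality if and only if $G$ is isomorphic to the star $K_{1,m}$. (Equivalently, $\mathrm{EX}^2(\mathcal{M}_m) = \{K_{1,m}\}$, where $\mathcal{M}_m$ is the set of graphs with $m$ edges and no isolated vertices.) -/
open Finset Matrix SimpleGraph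
open scoped Classical

lemma aux_inter {V : Type*} [Fintype V] (G : SimpleGraph V) {u v : V} (h : G.Adj u v) :
    G.incidenceFinset u ∩ G.incidenceFinset v = {s(u, v)} := by
  ext e
  induction e with
  | _ a b =>
  simp only [Finset.mem_inter, mem_incidenceFinset, mk'_mem_incidenceSet_iff, Finset.mem_singleton,
    Sym2.eq_iff]
  have := h.ne
  constructor
  · grind
  · rintro (⟨rfl, rfl⟩ | ⟨rfl, rfl⟩)
    · simp [h]
    · simp [h.symm]

lemma aux_card {V : Type*} [Fintype V] (G : SimpleGraph V) {u v : V} (h : G.Adj u v) :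
    (G.incidenceFinset u ∪ G.incidenceFinset v).card + 1 = G.degree u + G.degree v := by
  rw [← card_incidenceFinset_eq_degree, ← card_incidenceFinset_eq_degree,
    ← Finset.card_union_add_card_inter, aux_inter G h, Finset.card_singleton]

lemma aux_sub {V : Type*} [Fintype V] (G : SimpleGraph V) (u v : V) :
    G.incidenceFinset u ∪ G.incidenceFinset v ⊆ G.edgeFinset :=
  Finset.union_subset (G.incidenceFinset_subset u) (G.incidenceFinset_subset v)

lemma aux_le {V : Type*} [Fintype V] (G : SimpleGraph V) {u v : V} (h : G.Adj u v) :
    G.degree u + G.degree v ≤ G.edgeFinset.card + 1 := by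
  have := Finset.card_le_card (aux_sub G u v)
  have := aux_card G h
  omega

lemma aux_meet {V : Type*} [Fintype V] (G : SimpleGraph V) {u v : V} (h : G.Adj u v)
    (he : G.degree u + G.degree v = G.edgeFinset.card + 1) {a b : V} (hab : G.Adj a b) :
    a = u ∨ a = v ∨ b = u ∨ b = v := by
  have h1 := aux_card G h
  have h2 := Finset.eq_of_subset_of_card_le (aux_sub G u v) (by omega)
  have h3 : s(a, b) ∈ G.edgeFinset := by simpa using hab
  rw [← h2] at h3
  simp only [Finset.mem_union, mem_incidenceFinset, mk'_mem_incidenceSet_iff] at h3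
  grind

/-- Sum over ordered adjacent pairs. -/
lemma aux_sum {V : Type*} [Fintype V] (G : SimpleGraph V) :
    2 * ∑ v, G.degree v ^ 2 =
      ∑ p ∈ Finset.univ.filter (fun p : V × V => G.Adj p.1 p.2),
        (G.degree p.1 + G.degree p.2) := by
  have h1 : ∑ p ∈ Finset.univ.filter (fun p : V × V => G.Adj p.1 p.2), G.degree p.1
      = ∑ v, G.degree v ^ 2 := by
    rw [Finset.sum_filter, Fintype.sum_prod_type]
    refine Finset.sum_congr rfl fun v _ => ?_
    rw [← Finset.sum_filter]
    have hx : ∑ a ∈ Finset.univ.filter (fun a => G.Adj v a), G.degree v = G.degree v ^ 2 := by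
      rw [Finset.sum_const, smul_eq_mul, sq,
      ← G.card_neighborFinset_eq_degree v, neighborFinset_eq_filter]
    convert hx
  have h2 : ∑ p ∈ Finset.univ.filter (fun p : V × V => G.Adj p.1 p.2), G.degree p.2
      = ∑ v, G.degree v ^ 2 := by
    rw [← h1]
    refine Finset.sum_nbij' Prod.swap Prod.swap ?_ ?_ ?_ ?_ ?_ <;> simp [G.adj_comm]
  rw [Finset.sum_add_distrib, h1, h2]; ring

lemma aux_star {V : Type*} [Fintype V] (G : SimpleGraph V) (hiso : ∀ v, 0 < G.degree v) (c : V)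
    (hc : G.degree c = G.edgeFinset.card) :
    Nonempty (G ≃g completeBipartiteGraph Unit (Fin G.edgeFinset.card)) := by
  have h1 : G.incidenceFinset c = G.edgeFinset :=
    Finset.eq_of_subset_of_card_le (G.incidenceFinset_subset c)
      (by rw [card_incidenceFinset_eq_degree, hc])
  have h2 : ∀ a b, G.Adj a b → c = a ∨ c = b := by
    intro a b hab
    have h3 : s(a, b) ∈ G.edgeFinset := by simpa using hab
    rw [← h1] at h3
    simp only [mem_incidenceFinset, mk'_mem_incidenceSet_iff] at h3
    exact h3.2
  have h3 : ∀ x, x ≠ c → G.Adj c x := by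
    intro x hx
    obtain ⟨y, hy⟩ := (G.degree_pos_iff_exists_adj x).1 (hiso x)
    rcases h2 x y hy with h | h
    · exact absurd h.symm hx
    · subst h; exact hy.symm
  have h4 : Fintype.card {x // x ≠ c} = G.edgeFinset.card := by
    rw [← hc, ← G.card_neighborFinset_eq_degree c, neighborFinset_eq_filter,
      Fintype.card_subtype]
    congr 1
    ext x
    simp only [Finset.mem_filter, Finset.mem_univ, true_and]
    exact ⟨h3 x, fun h => h.ne'⟩
  let e : {x // x ≠ c} ≃ Fin G.edgeFinset.card := Fintype.equivFinOfCardEq h4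
  let f : V → Unit ⊕ Fin G.edgeFinset.card :=
    fun x => if h : x = c then Sum.inl () else Sum.inr (e ⟨x, h⟩)
  have fc : f c = Sum.inl () := by simp [f]
  have fx : ∀ x (h : x ≠ c), f x = Sum.inr (e ⟨x, h⟩) := fun x h => by simp [f, h]
  have hf : Function.Bijective f := by
    constructor
    · intro x y hxy
      by_cases hx : x = c <;> by_cases hy : y = c
      · rw [hx, hy]
      · subst hx; rw [fc, fx y hy] at hxy; simp at hxy
      · subst hy; rw [fc, fx x hx] at hxy; simp at hxy
      · rw [fx x hx, fx y hy] at hxy; simpa using hxy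
    · rintro (⟨⟩ | i)
      · exact ⟨c, fc⟩
      · refine ⟨(e.symm i).1, ?_⟩
        rw [fx _ (e.symm i).2]; simp
  refine ⟨⟨Equiv.ofBijective f hf, ?_⟩⟩
  intro x y
  simp only [Equiv.ofBijective_apply]
  by_cases hx : x = c <;> by_cases hy : y = c
  · subst hx; subst hy; simp [fc]
  · subst hx; simp [fc, fx y hy, h3 y hy]
  · subst hy; simp [fc, fx x hx, (h3 x hx).symm]
  · rw [fx x hx, fx y hy]
    have : ¬ G.Adj x y := fun h => by
      rcases h2 x y h with h | h
      · exact hx h.symm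
      · exact hy h.symm
    simp [this]

lemma aux_back {V : Type*} [Fintype V] (G : SimpleGraph V) (m : ℕ)
    (φ : G ≃g completeBipartiteGraph Unit (Fin m)) : ∑ v, G.degree v ^ 2 = m ^ 2 + m := by
  have h : ∑ v, G.degree v ^ 2 = ∑ w, (completeBipartiteGraph Unit (Fin m)).degree w ^ 2 :=
    Fintype.sum_equiv φ.toEquiv _ _ fun v => by
      rw [← φ.degree_eq v]; rfl
  have key : ∀ w, (completeBipartiteGraph Unit (Fin m)).degree w
      = Fintype.card {x // (completeBipartiteGraph Unit (Fin m)).Adj w x} := fun w => by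
    rw [← card_neighborFinset_eq_degree, neighborFinset_eq_filter, Fintype.card_subtype]
  have hl : (completeBipartiteGraph Unit (Fin m)).degree (Sum.inl ()) = m := by
    rw [← card_neighborFinset_eq_degree, neighborFinset_eq_filter]
    have : (Finset.univ.filter fun x => (completeBipartiteGraph Unit (Fin m)).Adj (Sum.inl ()) x)
      = Finset.univ.map Function.Embedding.inr := by ext (x | x) <;> simp
    rw [this]; simp
  have hr : ∀ i, (completeBipartiteGraph Unit (Fin m)).degree (Sum.inr i) = 1 := fun i => by
    rw [← card_neighborFinset_eq_degree, neighborFinset_eq_filter]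
    have : (Finset.univ.filter fun x => (completeBipartiteGraph Unit (Fin m)).Adj (Sum.inr i) x)
      = {Sum.inl ()} := by ext (x | x) <;> simp
    rw [this]; simp
  rw [h, Fintype.sum_sum_type]
  simp [hl, hr]

lemma aux_fwd {V : Type*} [Fintype V] (G : SimpleGraph V) (hm3 : G.edgeFinset.card ≠ 3)
    (he : ∀ u v, G.Adj u v → G.degree u + G.degree v = G.edgeFinset.card + 1)
    {u v : V} (h : G.Adj u v) : G.degree u = 1 ∨ G.degree v = 1 := by
  by_contra! hcon
  have pu : 0 < G.degree u := (G.degree_pos_iff_exists_adj u).2 ⟨v, h⟩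
  have pv : 0 < G.degree v := (G.degree_pos_iff_exists_adj v).2 ⟨u, h.symm⟩
  have hu : 1 < (G.neighborFinset u).card := by rw [card_neighborFinset_eq_degree]; omega
  have hv : 1 < (G.neighborFinset v).card := by rw [card_neighborFinset_eq_degree]; omega
  obtain ⟨a, ha, hav⟩ := Finset.exists_mem_ne hu v
  obtain ⟨b, hb, hbu⟩ := Finset.exists_mem_ne hv u
  rw [mem_neighborFinset] at ha hb
  have key : ∀ a b, G.Adj u a → G.Adj v b → a ≠ v → b ≠ u → a = b := by
    intro a b ha hb hav hbu
    have := aux_meet G ha (he _ _ ha) hb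
    have := h.ne
    grind
  have d1 : G.neighborFinset u ⊆ {v, b} := by
    intro x hx
    rw [mem_neighborFinset] at hx
    by_cases hxv : x = v
    · simp [hxv]
    · simp [key x b hx hb hxv hbu]
  have d2 : G.neighborFinset v ⊆ {u, a} := by
    intro x hx
    rw [mem_neighborFinset] at hx
    by_cases hxu : x = u
    · simp [hxu]
    · simp [key a x ha hx hav hxu]
  have c1 := (Finset.card_le_card d1).trans Finset.card_le_two
  have c2 := (Finset.card_le_card d2).trans Finset.card_le_two
  rw [card_neighborFinset_eq_degree] at c1 c2 hu hv
  have := he u v h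
  omega

/-- For `m ≥ 1`, `m ≠ 3`, any graph `G` with `m` edges and no isolated
vertices satisfies `∑_v d_G(v)² ≤ m² + m`, with equality iff `G ≅ K_{1,m}`. -/
theorem stmt_8 {V : Type*} [Fintype V] (m : ℕ) (hm : 1 ≤ m) (hm3 : m ≠ 3)
    (G : SimpleGraph V)
    (hE : G.edgeFinset.card = m) (hiso : ∀ v, 0 < G.degree v) :
    ∑ v, G.degree v ^ 2 ≤ m ^ 2 + m ∧
      (∑ v, G.degree v ^ 2 = m ^ 2 + m ↔
        Nonempty (G ≃g completeBipartiteGraph Unit (Fin m))) := by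
  subst hE
  have hs := aux_sum G
  have hc : (Finset.univ.filter (fun p : V × V => G.Adj p.1 p.2)).card
      = 2 * G.edgeFinset.card := by
    rw [two_mul_card_edgeFinset]
  have hle : ∀ p ∈ Finset.univ.filter (fun p : V × V => G.Adj p.1 p.2),
      G.degree p.1 + G.degree p.2 ≤ G.edgeFinset.card + 1 := fun p hp =>
    aux_le G (Finset.mem_filter.1 hp).2
  have hconst : ∑ p ∈ Finset.univ.filter (fun p : V × V => G.Adj p.1 p.2),
      (G.edgeFinset.card + 1) = 2 * (G.edgeFinset.card ^ 2 + G.edgeFinset.card) := by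
    rw [Finset.sum_const, hc, smul_eq_mul]; ring
  refine ⟨?_, ?_, ?_⟩
  · have := Finset.sum_le_sum hle
    omega
  · intro heq
    have h1 := (Finset.sum_eq_sum_iff_of_le hle).1 (by rw [← hs, hconst, heq])
    have he : ∀ u v, G.Adj u v → G.degree u + G.degree v = G.edgeFinset.card + 1 :=
      fun u v h => h1 (u, v) (by simpa using h)
    obtain ⟨e, hemem⟩ := Finset.card_pos.1 hm
    induction e with
    | _ u v =>
    have h : G.Adj u v := by simpa using hemem
    have h2 := he u v h
    rcases aux_fwd G hm3 he h with h3 | h3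
    · exact aux_star G hiso v (by omega)
    · exact aux_star G hiso u (by omega)
  · rintro ⟨φ⟩
    exact aux_back G _ φ
end

section
/- Let $G$ be a graph with exactly $3$ edges and no isolated vertices that is not isomorphic to the triangle $K_3$. Then $K_3$ is strictly walk-preferable to $G$; that is, there exists an integer $\ell \ge 1$ with $W^{\ell}(K_3) > W^{\ell}(G)$ and $W^{i}(K_3) = W^{i}(G)$ for all $1 \le i \le \ell - 1$. In fact one may take $\ell \le 3$. -/
open Finset Matrix SimpleGraph
open scoped Classical

theorem wc_one {V : Type*} [Fintype V] (G : SimpleGraph V) (v : V) :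
    walkCount G 1 v = G.degree v := by
  simp only [walkCount, Finset.sum_const, smul_eq_mul, mul_one]
  rw [← G.card_neighborFinset_eq_degree]
  congr 1
  ext w
  simp

theorem wc_K3 (l : ℕ) (v : Fin 3) : walkCount (completeGraph (Fin 3)) l v = 2 ^ l := by
  induction l generalizing v with
  | zero => simp [walkCount]
  | succ k ih =>
    simp only [walkCount, ih, Finset.sum_const, smul_eq_mul]
    have : (Finset.univ.filter (fun w => (completeGraph (Fin 3)).Adj v w)).card = 2 := by
      have h : Finset.univ.filter (fun w => (completeGraph (Fin 3)).Adj v w)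
          = Finset.univ.erase v := by
        ext w
        simp [eq_comm]
      rw [h, Finset.card_erase_of_mem (Finset.mem_univ _)]
      simp
    rw [pow_succ, mul_comm]
    congr 1
    convert this

theorem tw_K3 (l : ℕ) : totalWalks (completeGraph (Fin 3)) l = 3 * 2 ^ l := by
  simp [totalWalks, wc_K3]

theorem wc_succ_le {V : Type*} [Fintype V] (G : SimpleGraph V) (l c : ℕ)
    (h : ∀ v, walkCount G l v ≤ c) (v : V) :
    walkCount G (l + 1) v ≤ c * walkCount G 1 v := by
  simp only [walkCount, Finset.sum_const, smul_eq_mul, mul_one]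
  rw [mul_comm, ← smul_eq_mul]
  exact Finset.sum_le_card_nsmul _ _ _ (fun w _ => h w)

theorem tw_two {V : Type*} [Fintype V] (G : SimpleGraph V) :
    totalWalks G 2 = ∑ v, walkCount G 1 v ^ 2 := by
  have h : ∀ u, walkCount G 2 u = ∑ v, if G.Adj u v then walkCount G 1 v else 0 := by
    intro u
    rw [← Finset.sum_filter]
    rfl
  simp only [totalWalks, h]
  rw [Finset.sum_comm]
  refine Finset.sum_congr rfl fun v _ => ?_
  rw [← Finset.sum_filter, Finset.sum_const, smul_eq_mul, sq]
  congr 1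
  simp only [walkCount, Finset.sum_const, smul_eq_mul, mul_one]
  congr 1
  ext w
  simp [G.adj_comm]

theorem stmt_10 {V : Type*} [Fintype V] (G : SimpleGraph V)
    (hE : G.edgeFinset.card = 3) (hiso : ∀ v, 0 < G.degree v)
    (hnot : ¬ Nonempty (G ≃g completeGraph (Fin 3))) :
    ∃ ℓ : ℕ, 1 ≤ ℓ ∧ ℓ ≤ 3 ∧
      totalWalks G ℓ < totalWalks (completeGraph (Fin 3)) ℓ ∧
      ∀ i : ℕ, 1 ≤ i → i ≤ ℓ - 1 →
        totalWalks (completeGraph (Fin 3)) i = totalWalks G i := by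
  have hlt : ∀ v, walkCount G 1 v < Fintype.card V := by
    intro v
    rw [wc_one]
    exact G.degree_lt_card_verts v
  have hpos : ∀ v, 1 ≤ walkCount G 1 v := by
    intro v
    rw [wc_one]
    exact hiso v
  have hsum : ∑ v, walkCount G 1 v = 6 := by
    simp only [wc_one]
    have := G.sum_degrees_eq_twice_card_edges
    rw [hE] at this
    exact this
  have h1 : totalWalks G 1 = 6 := hsum
  have hn : 4 ≤ Fintype.card V := by
    by_contra hc
    have hle : ∀ v, walkCount G 1 v ≤ 2 := fun v => by have := hlt v; omega
    have hs : ∑ v, walkCount G 1 v ≤ ∑ v : V, 2 := Finset.sum_le_sum fun v _ => hle v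
    have hs' := hs
    rw [hsum] at hs'
    simp only [Finset.sum_const, Finset.card_univ, smul_eq_mul] at hs'
    have hc3 : Fintype.card V = 3 := by omega
    have heq : ∀ v, walkCount G 1 v = 2 := by
      have := (Finset.sum_eq_sum_iff_of_le (s := Finset.univ)
        (f := fun v => walkCount G 1 v) (g := fun _ : V => 2) (fun v _ => hle v)).1
        (by rw [hsum]; simp [hc3])
      exact fun v => this v (Finset.mem_univ v)
    have hadj : ∀ u v, u ≠ v → G.Adj u v := by
      intro u v huv
      have hu := heq u
      rw [wc_one, ← G.card_neighborFinset_eq_degree] at hu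
      have hsub : G.neighborFinset u ⊆ Finset.univ.erase u := by
        intro w hw
        simp only [SimpleGraph.mem_neighborFinset] at hw
        simp [hw.ne.symm]
      have hE := Finset.eq_of_subset_of_card_le hsub (by
        rw [hu, Finset.card_erase_of_mem (Finset.mem_univ _), Finset.card_univ, hc3])
      have : v ∈ G.neighborFinset u := by rw [hE]; simp [huv.symm]
      simpa using this
    apply hnot
    refine ⟨⟨Fintype.equivFinOfCardEq hc3, ?_⟩⟩
    intro a b
    simp only [completeGraph_eq_top, SimpleGraph.top_adj, ne_eq, EmbeddingLike.apply_eq_iff_eq]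
    exact ⟨hadj a b, fun h => h.ne⟩
  have hsplit : ∀ v, walkCount G 1 v + ∑ w ∈ Finset.univ.erase v, walkCount G 1 w = 6 := by
    intro v
    rw [Finset.add_sum_erase _ _ (Finset.mem_univ v), hsum]
  have hrest : ∀ v, Fintype.card V - 1 ≤ ∑ w ∈ Finset.univ.erase v, walkCount G 1 w := by
    intro v
    have := Finset.card_nsmul_le_sum (Finset.univ.erase v) (fun w => walkCount G 1 w) 1
      (fun w _ => hpos w)
    simpa [Finset.card_erase_of_mem] using this
  have hle3 : ∀ v, walkCount G 1 v ≤ 3 := by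
    intro v
    have := hsplit v
    have := hrest v
    have := hlt v
    omega
  have hpt : ∀ v, walkCount G 1 v ^ 2 + 3 ≤ 4 * walkCount G 1 v := by
    intro v
    have a := hpos v
    have b := hle3 v
    interval_cases walkCount G 1 v <;> simp
  have hS : totalWalks G 2 + 3 * Fintype.card V ≤ 24 := by
    have := Finset.sum_le_sum (s := Finset.univ) (fun v _ => hpt v)
    rw [Finset.sum_add_distrib, ← tw_two, ← Finset.mul_sum, hsum] at this
    simp only [Finset.sum_const, Finset.card_univ, smul_eq_mul] at this
    omega
  by_cases h2 : totalWalks G 2 < 12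
  · refine ⟨2, by omega, by omega, by rw [tw_K3]; omega, ?_⟩
    intro i hi hi'
    obtain rfl : i = 1 := by omega
    rw [tw_K3, h1]; norm_num
  have h2e : totalWalks G 2 = 12 := by omega
  have hc4 : Fintype.card V = 4 := by omega
  have heq : ∀ v, walkCount G 1 v ^ 2 + 3 = 4 * walkCount G 1 v := by
    have := (Finset.sum_eq_sum_iff_of_le (s := Finset.univ) (fun v _ => hpt v)).1
      (by
        rw [Finset.sum_add_distrib, ← tw_two, ← Finset.mul_sum, hsum, h2e]
        simp [hc4])
    exact fun v => this v (Finset.mem_univ v)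
  have h13 : ∀ v, walkCount G 1 v = 1 ∨ walkCount G 1 v = 3 := by
    intro v
    have a := hpos v
    have b := hle3 v
    have c := heq v
    interval_cases walkCount G 1 v <;> simp_all
  have hw2 : ∀ v, walkCount G 2 v ≤ 3 := by
    intro v
    rcases h13 v with h | h
    · have := wc_succ_le G 1 3 hle3 v
      rw [h] at this
      exact this
    · have hs := hsplit v
      have : walkCount G 2 v ≤ ∑ w ∈ Finset.univ.erase v, walkCount G 1 w := by
        rw [walkCount]
        apply Finset.sum_le_sum_of_subset
        intro w hw
        have hw' : G.Adj v w := by simpa using hw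
        simp [hw'.ne.symm]
      omega
  have hW3 : totalWalks G 3 ≤ 18 := by
    have := Finset.sum_le_sum (s := Finset.univ) (fun v _ => wc_succ_le G 2 3 hw2 v)
    rw [← Finset.mul_sum, hsum] at this
    exact this
  refine ⟨3, by omega, by omega, by rw [tw_K3]; omega, ?_⟩
  intro i hi hi'
  obtain rfl | rfl : i = 1 ∨ i = 2 := by omega
  · rw [tw_K3, h1]; norm_num
  · rw [tw_K3, h2e]; norm_num
end

section
/- For integers $t \ge 1$ and $r \ge 2$, there exists $N$ such that for all $n \ge N$ the following holds. Let $\mathcal{G}$ be a normal subset of $\mathcal{T}_{n,r,t}$ such that $\{G \in \mathcal{G} : H^G \in \mathrm{EX}^2(\mathcal{H}^{\mathcal{G}})\} \subseteq \bigcup_{1 \le i \le r} \mathcal{G}_i$. Then $\mathrm{SPEX}(\mathcal{G}) = \bigcup_{i : n_i = \lfloor n/r \rfloor} \mathrm{SPEX}(\mathcal{G}_i)$; that is, a graph $G \in \mathcal{G}$ has maximum spectral radius in $\mathcal{G}$ if and only if $G \in \mathcal{G}_i$ for some part $V_i$ of size $\lfloor n/r \rfloor$ and $G$ has maximum spectral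 radius in $\mathcal{G}_i$. -/
open Finset Matrix SimpleGraph
open scoped Classical

/-- `EXiter ℓ ℋ = EX^ℓ(ℋ)`: the members of `ℋ` that successively maximize
`W¹, W², …, W^ℓ`. -/
noncomputable def EXiter {V : Type*} [Fintype V] :
    ℕ → Set (SimpleGraph V) → Set (SimpleGraph V)
  | 0, ℋ => ℋ
  | ℓ + 1, ℋ =>
      {H ∈ EXiter ℓ ℋ | ∀ H' ∈ EXiter ℓ ℋ, totalWalks H' (ℓ + 1) ≤ totalWalks H (ℓ + 1)}

/-- `SPEXset 𝒢`: the members of `𝒢` with maximum spectral radius. -/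
noncomputable def SPEXset {V : Type*} [Fintype V] (𝒢 : Set (SimpleGraph V)) :
    Set (SimpleGraph V) :=
  {G ∈ 𝒢 | ∀ G' ∈ 𝒢, spectralRad G' ≤ spectralRad G}

/-- `emb n r G = H^G`: the graph of the edges of `G` beyond the Turán graph `T(n,r)`
(whose parts are the residue classes `V_i = {v : (v : ℕ) % r = i}`). -/
def emb (n r : ℕ) (G : SimpleGraph (Fin n)) : SimpleGraph (Fin n) :=
  G \ turanGraph n r

/-- `TuranFam n r t = 𝒯_{n,r,t}`: the graphs obtained from the Turán graph `T(n,r)` by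
embedding `t` edges into its parts. -/
noncomputable def TuranFam (n r t : ℕ) : Set (SimpleGraph (Fin n)) :=
  {G | turanGraph n r ≤ G ∧
    (∀ u v : Fin n, (emb n r G).Adj u v → (u : ℕ) % r = (v : ℕ) % r) ∧
    (emb n r G).edgeFinset.card = t}

/-- `inPart n r i G`: all embedded edges of `G` lie inside the part `V_i` (so
`H^G = H^G_i`). -/
def inPart (n r : ℕ) (i : Fin r) (G : SimpleGraph (Fin n)) : Prop :=
  ∀ u v : Fin n, (emb n r G).Adj u v → (u : ℕ) % r = (i : ℕ)

/-- `classSet n r 𝒢 i = 𝒢_i`. -/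
def classSet (n r : ℕ) (𝒢 : Set (SimpleGraph (Fin n))) (i : Fin r) :
    Set (SimpleGraph (Fin n)) :=
  {G ∈ 𝒢 | inPart n r i G}

/-- `𝒢` is a normal subset of `𝒯_{n,r,t}`: for any `i ≠ j` and any `G ∈ 𝒢_i` there is
`G' ∈ 𝒢_j` with `H^{G'}` a copy of `H^G`. -/
def IsNormal (n r : ℕ) (𝒢 : Set (SimpleGraph (Fin n))) : Prop :=
  ∀ i j : Fin r, i ≠ j → ∀ G ∈ classSet n r 𝒢 i, ∃ G' ∈ classSet n r 𝒢 j,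
    Nonempty (emb n r G ≃g emb n r G')

/-- `partSize n r i = n_i`: the size of the part `V_i` of the Turán graph `T(n,r)`. -/
def partSize (n r : ℕ) (i : Fin r) : ℕ :=
  (Finset.univ.filter (fun v : Fin n => (v : ℕ) % r = (i : ℕ))).card

section spectral
variable {V : Type*} [Fintype V]

lemma eigset_finite (G : SimpleGraph V) :
    {μ : ℝ | ∃ x : V → ℝ, x ≠ 0 ∧ (G.adjMatrix ℝ) *ᵥ x = μ • x}.Finite := by
  refine (Module.End.finite_hasEigenvalue (Matrix.toLin' (G.adjMatrix ℝ))).subset ?_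
  rintro μ ⟨x, hx, h⟩
  exact Module.End.hasEigenvalue_of_hasEigenvector
    (x := x) ⟨by rw [Module.End.mem_eigenspace_iff]; simpa using h, hx⟩

lemma eigset_nonempty [Nonempty V] (G : SimpleGraph V) :
    {μ : ℝ | ∃ x : V → ℝ, x ≠ 0 ∧ (G.adjMatrix ℝ) *ᵥ x = μ • x}.Nonempty := by
  have hA := G.isHermitian_adjMatrix (R := ℝ)
  obtain ⟨j⟩ := (inferInstance : Nonempty V)
  refine ⟨hA.eigenvalues j, ⇑(hA.eigenvectorBasis j), ?_, hA.mulVec_eigenvectorBasis j⟩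
  intro h
  have := hA.eigenvectorBasis.orthonormal.ne_zero j
  apply this
  ext u
  exact congrFun h u

lemma spectral_posSemidef (G : SimpleGraph V) :
    (spectralRad G • (1 : Matrix V V ℝ) - G.adjMatrix ℝ).PosSemidef := by
  have hA := G.isHermitian_adjMatrix (R := ℝ)
  have hM : (spectralRad G • (1 : Matrix V V ℝ) - G.adjMatrix ℝ).IsHermitian := by
    refine Matrix.IsHermitian.sub ?_ hA
    simp [Matrix.IsHermitian]
  rw [hM.posSemidef_iff_eigenvalues_nonneg]
  intro j
  have h1 := hM.mulVec_eigenvectorBasis j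
  have : spectralRad G - hM.eigenvalues j ≤ spectralRad G := by
    refine le_csSup (eigset_finite G).bddAbove ⟨⇑(hM.eigenvectorBasis j), ?_, ?_⟩
    · intro h
      apply hM.eigenvectorBasis.orthonormal.ne_zero j
      ext u
      exact congrFun h u
    · rw [Matrix.sub_mulVec, Matrix.smul_mulVec, Matrix.one_mulVec] at h1
      rw [sub_smul, ← h1]
      abel
  simpa using this

/-- Rayleigh bound. -/
lemma rayleigh_le (G : SimpleGraph V) (y : V → ℝ) :
    ∑ u, y u * ((G.adjMatrix ℝ) *ᵥ y) u ≤ spectralRad G * ∑ u, y u * y u := by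
  have h := (spectral_posSemidef G).dotProduct_mulVec_nonneg y
  rw [Matrix.sub_mulVec, Matrix.smul_mulVec, Matrix.one_mulVec, dotProduct_sub] at h
  simp only [dotProduct, star_trivial, Pi.smul_apply, smul_eq_mul] at h
  have : ∑ u, y u * (spectralRad G * y u) = spectralRad G * ∑ u, y u * y u := by
    rw [Finset.mul_sum]; exact Finset.sum_congr rfl fun _ _ => by ring
  linarith

lemma le_spectralRad (G : SimpleGraph V) (l : ℝ) (y : V → ℝ) (hy : ∀ u, 0 ≤ y u) (u₀ : V)
    (hu₀ : 0 < y u₀) (h : ∀ u, l * y u ≤ ((G.adjMatrix ℝ) *ᵥ y) u) : l ≤ spectralRad G := by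
  have h1 := rayleigh_le G y
  have h2 : l * ∑ u, y u * y u ≤ ∑ u, y u * ((G.adjMatrix ℝ) *ᵥ y) u := by
    rw [Finset.mul_sum]
    refine Finset.sum_le_sum fun u _ => ?_
    nlinarith [mul_le_mul_of_nonneg_left (h u) (hy u)]
  have h3 : 0 < ∑ u, y u * y u :=
    Finset.sum_pos' (fun u _ => mul_self_nonneg _) ⟨u₀, Finset.mem_univ _, by positivity⟩
  exact le_of_mul_le_mul_right (h2.trans h1) h3

lemma lt_spectralRad (G : SimpleGraph V) (l : ℝ) (y : V → ℝ) (hy : ∀ u, 0 ≤ y u) (u₀ : V)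
    (hu₀ : 0 < y u₀) (h : ∀ u, l * y u ≤ ((G.adjMatrix ℝ) *ᵥ y) u)
    (h' : l * y u₀ < ((G.adjMatrix ℝ) *ᵥ y) u₀) : l < spectralRad G := by
  have h1 := rayleigh_le G y
  have h2 : l * ∑ u, y u * y u < ∑ u, y u * ((G.adjMatrix ℝ) *ᵥ y) u := by
    rw [Finset.mul_sum]
    refine Finset.sum_lt_sum (fun u _ => ?_) ⟨u₀, Finset.mem_univ _, ?_⟩
    · nlinarith [mul_le_mul_of_nonneg_left (h u) (hy u)]
    · nlinarith [mul_lt_mul_of_pos_left h' hu₀]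
  have h3 : 0 < ∑ u, y u * y u :=
    Finset.sum_pos' (fun u _ => mul_self_nonneg _) ⟨u₀, Finset.mem_univ _, by positivity⟩
  exact lt_of_mul_lt_mul_right (h2.trans_le h1) h3.le

/-- A nonnegative eigenvector for the spectral radius. -/
lemma exists_perron [Nonempty V] (G : SimpleGraph V) :
    ∃ x : V → ℝ, (∀ u, 0 ≤ x u) ∧ (∃ u, 0 < x u) ∧
      ∀ u, ((G.adjMatrix ℝ) *ᵥ x) u = spectralRad G * x u := by
  obtain ⟨x, hx, hAx⟩ := (eigset_nonempty G).csSup_mem (eigset_finite G)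
  change _ = spectralRad G • x at hAx
  set y : V → ℝ := fun u => |x u| with hy
  refine ⟨y, fun u => abs_nonneg _, ?_, ?_⟩
  · obtain ⟨u, hu⟩ := Function.ne_iff.mp hx
    exact ⟨u, abs_pos.mpr hu⟩
  have hP := spectral_posSemidef G
  have key : ∀ u, spectralRad G * (y u * y u) ≤ y u * ((G.adjMatrix ℝ) *ᵥ y) u := by
    intro u
    have h1 : spectralRad G * x u = ((G.adjMatrix ℝ) *ᵥ x) u := by rw [hAx]; simp
    have h2 : |((G.adjMatrix ℝ) *ᵥ x) u| ≤ ((G.adjMatrix ℝ) *ᵥ y) u := by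
      simp only [SimpleGraph.adjMatrix_mulVec_apply, hy]
      exact Finset.abs_sum_le_sum_abs _ _
    have h3 : spectralRad G * (y u * y u) = x u * ((G.adjMatrix ℝ) *ᵥ x) u := by
      rw [← h1, hy]; simp only [abs_mul_abs_self]; ring
    rw [h3]
    calc _ ≤ |x u * ((G.adjMatrix ℝ) *ᵥ x) u| := le_abs_self _
      _ = |x u| * |((G.adjMatrix ℝ) *ᵥ x) u| := abs_mul _ _
      _ ≤ _ := mul_le_mul_of_nonneg_left h2 (abs_nonneg _)
  have h0 : star y ⬝ᵥ (spectralRad G • (1 : Matrix V V ℝ) - G.adjMatrix ℝ) *ᵥ y = 0 := by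
    refine le_antisymm ?_ (hP.dotProduct_mulVec_nonneg y)
    rw [Matrix.sub_mulVec, Matrix.smul_mulVec, Matrix.one_mulVec]
    simp only [dotProduct, star_trivial, Pi.smul_apply, Pi.sub_apply, smul_eq_mul]
    refine Finset.sum_nonpos fun u _ => ?_
    nlinarith [key u]
  rw [hP.dotProduct_mulVec_zero_iff] at h0
  intro u
  have := congrFun h0 u
  rw [Matrix.sub_mulVec, Matrix.smul_mulVec, Matrix.one_mulVec] at this
  simp at this
  simp
  linarith

end spectral
section parts
set_option linter.unusedSectionVars false
variable {V K : Type*} [Fintype V] [Fintype K]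

/-- Sum of `f` over the neighbours of `u`. -/
noncomputable def nb (H : SimpleGraph V) (f : V → ℝ) (u : V) : ℝ :=
  ∑ v, if H.Adj u v then f v else 0

/-- Sum of `f` over the colour class `k`. -/
noncomputable def psum (c : V → K) (f : V → ℝ) (k : K) : ℝ :=
  ∑ u, if c u = k then f u else 0

lemma psum_total (c : V → K) (f : V → ℝ) : ∑ k, psum c f k = ∑ u, f u := by
  unfold psum
  rw [Finset.sum_comm]
  simp

lemma psum_nonneg (c : V → K) (f : V → ℝ) (hf : ∀ u, 0 ≤ f u) (k : K) : 0 ≤ psum c f k :=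
  Finset.sum_nonneg fun u _ => by split_ifs <;> simp [hf]

lemma psum_mul (c : V → K) (f : V → ℝ) (a : K → ℝ) (k : K) :
    psum c (fun u => a (c u) * f u) k = a k * psum c f k := by
  unfold psum
  rw [Finset.mul_sum]
  refine Finset.sum_congr rfl fun u _ => ?_
  split_ifs with h
  · simp only [h]
  · simp

lemma nb_nonneg (H : SimpleGraph V) (f : V → ℝ) (hf : ∀ u, 0 ≤ f u) (u : V) : 0 ≤ nb H f u :=
  Finset.sum_nonneg fun u _ => by split_ifs <;> simp [hf]

lemma nb_mono (H : SimpleGraph V) (f g : V → ℝ) (hf : ∀ u, f u ≤ g u) (u : V) :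
    nb H f u ≤ nb H g u :=
  Finset.sum_le_sum fun u _ => by split_ifs <;> simp [hf]

lemma nb_add (H : SimpleGraph V) (f g : V → ℝ) (u : V) :
    nb H (fun v => f v + g v) u = nb H f u + nb H g u := by
  unfold nb
  rw [← Finset.sum_add_distrib]
  exact Finset.sum_congr rfl fun u _ => by split_ifs <;> simp

lemma nb_smul (H : SimpleGraph V) (f : V → ℝ) (a : ℝ) (u : V) :
    nb H (fun v => a * f v) u = a * nb H f u := by
  unfold nb
  rw [Finset.mul_sum]
  exact Finset.sum_congr rfl fun u _ => by split_ifs <;> simp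

lemma nb_symm (H : SimpleGraph V) (f g : V → ℝ) :
    ∑ u, g u * nb H f u = ∑ u, f u * nb H g u := by
  unfold nb
  simp only [Finset.mul_sum]
  rw [Finset.sum_comm]
  refine Finset.sum_congr rfl fun u _ => Finset.sum_congr rfl fun v _ => ?_
  by_cases h : H.Adj u v
  · simp [h, h.symm, mul_comm]
  · have : ¬ H.Adj v u := fun h' => h h'.symm
    simp [h, this]

lemma nb_mul_color (H : SimpleGraph V) (c : V → K) (hH : ∀ u v, H.Adj u v → c u = c v)
    (f : V → ℝ) (a : K → ℝ) (u : V) :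
    nb H (fun v => a (c v) * f v) u = a (c u) * nb H f u := by
  unfold nb
  rw [Finset.mul_sum]
  refine Finset.sum_congr rfl fun v _ => ?_
  split_ifs with h
  · rw [hH u v h]
  · simp

lemma adj_mulVec (G H : SimpleGraph V) (c : V → K)
    (hG : ∀ u v, G.Adj u v ↔ c u ≠ c v ∨ H.Adj u v) (hH : ∀ u v, H.Adj u v → c u = c v)
    (y : V → ℝ) (u : V) :
    ((G.adjMatrix ℝ) *ᵥ y) u = ∑ v, y v - psum c y (c u) + nb H y u := by
  unfold nb psum
  rw [SimpleGraph.adjMatrix_mulVec_apply, SimpleGraph.neighborFinset_eq_filter,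
    Finset.sum_filter, ← Finset.sum_sub_distrib, ← Finset.sum_add_distrib]
  refine Finset.sum_congr rfl fun v _ => ?_
  by_cases h1 : c u = c v
  · by_cases h2 : H.Adj u v
    · simp [hG, h1, h2]
    · simp [hG, h1, h2]
  · have h2 : ¬ H.Adj u v := fun h => h1 (hH u v h)
    have h3 : ¬ c v = c u := fun h => h1 h.symm
    simp [hG, h1, h2, h3]

lemma crit_aux (G H : SimpleGraph V) (c : V → K)
    (hG : ∀ u v, G.Adj u v ↔ c u ≠ c v ∨ H.Adj u v) (hH : ∀ u v, H.Adj u v → c u = c v)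
    (l : ℝ) (z : V → ℝ) (hz : ∀ u, 0 ≤ z u) (hsub : ∀ u, l * z u ≤ 1 + nb H z u) (u : V) :
    l * ((1 + psum c z (c u))⁻¹ * z u) +
      (∑ k, psum c z k / (1 + psum c z k) - 1) ≤
      ((G.adjMatrix ℝ) *ᵥ (fun v => (1 + psum c z (c v))⁻¹ * z v)) u := by
  have hF := fun k => psum_nonneg c z hz k
  have e1 : ∀ k, psum c (fun v => (1 + psum c z (c v))⁻¹ * z v) k
      = (1 + psum c z k)⁻¹ * psum c z k :=
    fun k => psum_mul c z (fun k => (1 + psum c z k)⁻¹) k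
  have e2 : nb H (fun v => (1 + psum c z (c v))⁻¹ * z v) u = (1 + psum c z (c u))⁻¹ * nb H z u :=
    nb_mul_color H c hH z (fun k => (1 + psum c z k)⁻¹) u
  rw [adj_mulVec G H c hG hH, ← psum_total c, e2, e1]
  simp only [e1]
  have e3 : ∑ k, psum c z k / (1 + psum c z k) = ∑ k, (1 + psum c z k)⁻¹ * psum c z k :=
    Finset.sum_congr rfl fun k _ => by rw [div_eq_mul_inv, mul_comm]
  rw [e3]
  have hp : 0 < 1 + psum c z (c u) := by linarith [hF (c u)]
  have hi : 0 < (1 + psum c z (c u))⁻¹ := inv_pos.mpr hp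
  have e4 : (1 + psum c z (c u))⁻¹ * psum c z (c u) = 1 - (1 + psum c z (c u))⁻¹ := by
    field_simp; ring
  rw [e4]
  have := mul_le_mul_of_nonneg_left (hsub u) hi.le
  nlinarith

lemma crit_exists_pos (c : V → K) (z : V → ℝ) (hz : ∀ u, 0 ≤ z u)
    (hsum : 1 ≤ ∑ k, psum c z k / (1 + psum c z k)) : ∃ u, 0 < z u := by
  by_contra hcon
  push Not at hcon
  have : ∀ u, z u = 0 := fun u => le_antisymm (hcon u) (hz u)
  simp [psum, this] at hsum
  linarith

lemma crit_le (G H : SimpleGraph V) (c : V → K)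
    (hG : ∀ u v, G.Adj u v ↔ c u ≠ c v ∨ H.Adj u v) (hH : ∀ u v, H.Adj u v → c u = c v)
    (l : ℝ) (z : V → ℝ) (hz : ∀ u, 0 ≤ z u) (hsub : ∀ u, l * z u ≤ 1 + nb H z u)
    (hsum : 1 ≤ ∑ k, psum c z k / (1 + psum c z k)) : l ≤ spectralRad G := by
  obtain ⟨u₀, hu₀⟩ := crit_exists_pos c z hz hsum
  have hF := fun k => psum_nonneg c z hz k
  have hi : ∀ u, 0 < (1 + psum c z (c u))⁻¹ := fun u => inv_pos.mpr (by linarith [hF (c u)])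
  refine le_spectralRad G l _ (fun u => mul_nonneg (hi u).le (hz u)) u₀ (mul_pos (hi _) hu₀) ?_
  intro u
  have := crit_aux G H c hG hH l z hz hsub u
  linarith

lemma crit_lt (G H : SimpleGraph V) (c : V → K)
    (hG : ∀ u v, G.Adj u v ↔ c u ≠ c v ∨ H.Adj u v) (hH : ∀ u v, H.Adj u v → c u = c v)
    (l : ℝ) (z : V → ℝ) (hz : ∀ u, 0 ≤ z u) (hsub : ∀ u, l * z u ≤ 1 + nb H z u)
    (hsum : 1 < ∑ k, psum c z k / (1 + psum c z k)) : l < spectralRad G := by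
  obtain ⟨u₀, hu₀⟩ := crit_exists_pos c z hz hsum.le
  have hF := fun k => psum_nonneg c z hz k
  have hi : ∀ u, 0 < (1 + psum c z (c u))⁻¹ := fun u => inv_pos.mpr (by linarith [hF (c u)])
  refine lt_spectralRad G l _ (fun u => mul_nonneg (hi u).le (hz u)) u₀ (mul_pos (hi _) hu₀) ?_ ?_
  · intro u
    have := crit_aux G H c hG hH l z hz hsub u
    linarith
  · have := crit_aux G H c hG hH l z hz hsub u₀
    linarith

/-- The normalized Perron vector. -/
lemma exists_zeta [Nonempty V] (G H : SimpleGraph V) (c : V → K)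
    (hG : ∀ u v, G.Adj u v ↔ c u ≠ c v ∨ H.Adj u v) (hH : ∀ u v, H.Adj u v → c u = c v)
    (hc : ∀ k : K, ∃ u, c u ≠ k) :
    ∃ z : V → ℝ, (∀ u, 0 ≤ z u) ∧ (∀ u, spectralRad G * z u = 1 + nb H z u) ∧
      ∑ k, psum c z k / (1 + psum c z k) = 1 := by
  obtain ⟨x, hx, ⟨u₁, hu₁⟩, hAx⟩ := exists_perron G
  have hA : ∀ u, spectralRad G * x u = ∑ v, x v - psum c x (c u) + nb H x u := by
    intro u; rw [← hAx, adj_mulVec G H c hG hH]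
  set S := ∑ v, x v with hS
  have hSpos : 0 < S := Finset.sum_pos' (fun u _ => hx u) ⟨u₁, Finset.mem_univ _, hu₁⟩
  have hle : ∀ k, psum c x k ≤ S := by
    intro k
    refine Finset.sum_le_sum fun u _ => ?_
    split_ifs
    · exact le_rfl
    · exact hx u
  have hlt : ∀ k, 0 < S - psum c x k := by
    intro k
    by_contra hcon
    have heq : psum c x k = S := le_antisymm (hle k) (by linarith)
    have hzero : ∀ u, c u ≠ k → x u = 0 := by
      have h0 : ∑ u, (x u - if c u = k then x u else 0) = 0 := by
        rw [Finset.sum_sub_distrib]; unfold psum at heq; linarith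
      rw [Finset.sum_eq_zero_iff_of_nonneg] at h0
      · intro u hu
        have := h0 u (Finset.mem_univ _)
        simpa [hu] using this
      · intro u _
        split_ifs <;> simp [hx]
    obtain ⟨u, hu⟩ := hc k
    have h1 := hA u
    rw [hzero u hu] at h1
    have h2 : psum c x (c u) = 0 := by
      refine Finset.sum_eq_zero fun v _ => ?_
      split_ifs with h
      · exact hzero v (by rw [h]; exact hu)
      · rfl
    have h3 := nb_nonneg H x hx u
    rw [h2] at h1
    linarith
  have hps : ∀ k, psum c (fun u => (S - psum c x (c u))⁻¹ * x u) k
      = (S - psum c x k)⁻¹ * psum c x k :=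
    fun k => psum_mul c x (fun k => (S - psum c x k)⁻¹) k
  refine ⟨fun u => (S - psum c x (c u))⁻¹ * x u,
    fun u => mul_nonneg (inv_pos.mpr (hlt _)).le (hx u), fun u => ?_, ?_⟩
  · have e2 := nb_mul_color H c hH x (fun k => (S - psum c x k)⁻¹) u
    rw [e2]
    have := hlt (c u)
    have h1 := hA u
    field_simp
    linarith
  · simp only [hps]
    have : ∀ k, (S - psum c x k)⁻¹ * psum c x k / (1 + (S - psum c x k)⁻¹ * psum c x k)
        = psum c x k / S := by
      intro k
      have := hlt k
      have e : 1 + (S - psum c x k)⁻¹ * psum c x k = S / (S - psum c x k) := by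
        field_simp; ring
      rw [e]
      field_simp
    simp only [this]
    rw [← Finset.sum_div, psum_total, div_self hSpos.ne']

/-- number of vertices in class `k` as a real -/
noncomputable def psize (c : V → K) (k : K) : ℝ := psum c (fun _ => 1) k

lemma psum_sub (c : V → K) (f : V → ℝ) (a : ℝ) (k : K) :
    psum c f k = psize c k * a + psum c (fun u => f u - a) k := by
  unfold psize psum
  rw [Finset.sum_mul, ← Finset.sum_add_distrib]
  exact Finset.sum_congr rfl fun u _ => by split_ifs <;> simp

lemma psum_supp (c : V → K) (f : V → ℝ) (i : K) (hf : ∀ u, c u ≠ i → f u = 0) (k : K) :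
    psum c f k = if k = i then ∑ u, f u else 0 := by
  unfold psum
  split_ifs with h
  · refine Finset.sum_congr rfl fun u _ => ?_
    split_ifs with h2
    · rfl
    · rw [hf u (by rw [← h]; exact h2)]
  · refine Finset.sum_eq_zero fun u _ => ?_
    split_ifs with h2
    · exact hf u (by rw [h2]; exact h)
    · rfl

lemma nb_isolated (H : SimpleGraph V) (f : V → ℝ) (u : V) (h : ∀ v, ¬ H.Adj u v) :
    nb H f u = 0 :=
  Finset.sum_eq_zero fun v _ => by simp [h v]

lemma spectralRad_lower [Nonempty V] (G H : SimpleGraph V) (c : V → K)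
    (hG : ∀ u v, G.Adj u v ↔ c u ≠ c v ∨ H.Adj u v) (hH : ∀ u v, H.Adj u v → c u = c v)
    (m : ℝ) (hm : ∀ k, m ≤ psize c k) (hK : ∀ k : K, ∃ j, j ≠ k) : m ≤ spectralRad G := by
  obtain ⟨u₀⟩ := (inferInstance : Nonempty V)
  refine le_spectralRad G m (fun _ => 1) (fun _ => zero_le_one) u₀ one_pos fun u => ?_
  rw [adj_mulVec G H c hG hH, ← psum_total c]
  have h1 := nb_nonneg H (fun _ => 1) (fun _ => zero_le_one) u
  obtain ⟨j, hj⟩ := hK (c u)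
  have h2 : psum c (fun _ => 1) (c u) + psum c (fun _ => 1) j ≤ ∑ k, psum c (fun _ => (1:ℝ)) k := by
    rw [← Finset.sum_pair (f := fun k => psum c (fun _ => (1:ℝ)) k) hj.symm]
    exact Finset.sum_le_sum_of_subset_of_nonneg (Finset.subset_univ _)
      fun k _ _ => psum_nonneg c _ (fun _ => zero_le_one) k
  have := hm j
  unfold psize at this
  linarith

end parts
section compare
set_option linter.unusedSectionVars false
variable {V K : Type*} [Fintype V] [Fintype K]

lemma g_delta (b e : ℝ) (hb : 0 ≤ b) (he : 0 ≤ e) :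
    (b + e) / (1 + (b + e)) = b / (1 + b) + e / ((1 + b) * (1 + b + e)) := by
  have h1 : 0 < 1 + b := by linarith
  have h2 : 0 < 1 + (b + e) := by linarith
  have h3 : 0 < 1 + b + e := by linarith
  field_simp
  ring

lemma sum_bump (b : K → ℝ) (hb : ∀ k, 0 ≤ b k) (e : ℝ) (he : 0 ≤ e) (i : K) :
    ∑ k, (b k + if k = i then e else 0) / (1 + (b k + if k = i then e else 0)) =
      ∑ k, b k / (1 + b k) + e / ((1 + b i) * (1 + b i + e)) := by
  have : ∀ k, (b k + if k = i then e else 0) / (1 + (b k + if k = i then e else 0)) =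
      b k / (1 + b k) + if k = i then e / ((1 + b i) * (1 + b i + e)) else 0 := by
    intro k
    split_ifs with h
    · rw [g_delta _ _ (hb k) he, h]
    · simp
  simp only [this]
  rw [Finset.sum_add_distrib]
  simp

lemma psize_nonneg (c : V → K) (k : K) : 0 ≤ psize c k :=
  psum_nonneg c _ (fun _ => zero_le_one) k

lemma iso_aux (G H G' H' : SimpleGraph V) [Nonempty V] (c : V → K)
    (hG : ∀ u v, G.Adj u v ↔ c u ≠ c v ∨ H.Adj u v) (hH : ∀ u v, H.Adj u v → c u = c v)
    (hc : ∀ k : K, ∃ u, c u ≠ k)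
    (i j : K) (hj : ∀ u v, H.Adj u v → c u = j) (hi : ∀ u v, H'.Adj u v → c u = i)
    (φ : H ≃g H') (hρ : 0 < spectralRad G) :
    ∃ z' : V → ℝ, ∃ e : ℝ, (∀ u, 0 ≤ z' u) ∧
      (∀ u, spectralRad G * z' u ≤ 1 + nb H' z' u) ∧ 0 ≤ e ∧
      ((∃ u v, H.Adj u v) → 0 < e) ∧
      (∑ k, psize c k * (spectralRad G)⁻¹ / (1 + psize c k * (spectralRad G)⁻¹) +
        e / ((1 + psize c j * (spectralRad G)⁻¹) * (1 + psize c j * (spectralRad G)⁻¹ + e)) = 1) ∧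
      (∑ k, psum c z' k / (1 + psum c z' k) =
        ∑ k, psize c k * (spectralRad G)⁻¹ / (1 + psize c k * (spectralRad G)⁻¹) +
        e / ((1 + psize c i * (spectralRad G)⁻¹) * (1 + psize c i * (spectralRad G)⁻¹ + e))) := by
  obtain ⟨z, hz, heq, hsum⟩ := exists_zeta G H c hG hH hc
  set ρ := spectralRad G with hρdef
  have hia : 0 < ρ⁻¹ := inv_pos.mpr hρ
  have hdiff : ∀ u, z u - ρ⁻¹ = ρ⁻¹ * nb H z u := by
    intro u
    have := heq u
    field_simp
    linarith
  have hdn : ∀ u, 0 ≤ z u - ρ⁻¹ := fun u => by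
    rw [hdiff]; exact mul_nonneg hia.le (nb_nonneg H z hz u)
  have hnb' : ∀ u, nb H' (fun v => z (φ.symm v)) u = nb H z (φ.symm u) := by
    intro u
    unfold nb
    rw [← Equiv.sum_comp φ.symm.toEquiv (fun v => if H.Adj (φ.symm u) v then z v else 0)]
    refine Finset.sum_congr rfl fun v _ => ?_
    have : H'.Adj u v ↔ H.Adj (φ.symm u) (φ.symm v) := φ.symm.map_adj_iff.symm
    simp [this]
  have hiso : ∀ u, c u ≠ j → z u - ρ⁻¹ = 0 := by
    intro u hu
    rw [hdiff, nb_isolated, mul_zero]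
    exact fun v hv => hu (hj u v hv)
  have hiso' : ∀ u, c u ≠ i → z (φ.symm u) - ρ⁻¹ = 0 := by
    intro u hu
    rw [hdiff, ← hnb', nb_isolated, mul_zero]
    exact fun v hv => hu (hi u v hv)
  have hb : ∀ k, 0 ≤ psize c k * ρ⁻¹ := fun k => mul_nonneg (psize_nonneg c k) hia.le
  have hse : ∑ u, (z (φ.symm u) - ρ⁻¹) = ∑ u, (z u - ρ⁻¹) :=
    Equiv.sum_comp φ.symm.toEquiv (fun u => z u - ρ⁻¹)
  have he : 0 ≤ ∑ u, (z u - ρ⁻¹) := Finset.sum_nonneg fun u _ => hdn u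
  refine ⟨fun v => z (φ.symm v), ∑ u, (z u - ρ⁻¹), fun u => hz _, fun u => ?_, he, ?_, ?_, ?_⟩
  · rw [hnb']; exact (heq _).le
  · rintro ⟨u, v, huv⟩
    refine Finset.sum_pos' (fun u _ => hdn u) ⟨u, Finset.mem_univ _, ?_⟩
    rw [hdiff]
    refine mul_pos hia (Finset.sum_pos' (fun w _ => ?_) ⟨v, Finset.mem_univ _, ?_⟩)
    · split_ifs <;> simp [hz]
    · simp only [huv, if_true]
      linarith [hdn v]
  · refine Eq.trans ?_ hsum
    rw [← sum_bump _ hb _ he]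
    refine Finset.sum_congr rfl fun k _ => ?_
    rw [psum_sub c z ρ⁻¹ k, psum_supp c (fun u => z u - ρ⁻¹) j hiso]
  · rw [← sum_bump _ hb _ he]
    refine Finset.sum_congr rfl fun k _ => ?_
    rw [psum_sub c (fun v => z (φ.symm v)) ρ⁻¹ k,
      psum_supp c (fun u => z (φ.symm u) - ρ⁻¹) i hiso', hse]

lemma iso_le (G H G' H' : SimpleGraph V) [Nonempty V] (c : V → K)
    (hG : ∀ u v, G.Adj u v ↔ c u ≠ c v ∨ H.Adj u v) (hH : ∀ u v, H.Adj u v → c u = c v)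
    (hG' : ∀ u v, G'.Adj u v ↔ c u ≠ c v ∨ H'.Adj u v) (hH' : ∀ u v, H'.Adj u v → c u = c v)
    (hc : ∀ k : K, ∃ u, c u ≠ k)
    (i j : K) (hj : ∀ u v, H.Adj u v → c u = j) (hi : ∀ u v, H'.Adj u v → c u = i)
    (φ : H ≃g H') (hρ : 0 < spectralRad G) (hij : psize c i ≤ psize c j) :
    spectralRad G ≤ spectralRad G' := by
  obtain ⟨z, e, hz, hsub, he, -, h1, h2⟩ := iso_aux G H G' H' c hG hH hc i j hj hi φ hρ
  refine crit_le G' H' c hG' hH' _ z hz hsub ?_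
  have hia : 0 < (spectralRad G)⁻¹ := inv_pos.mpr hρ
  rw [h2]
  refine h1.ge.trans ?_
  have hb : 0 ≤ psize c i * (spectralRad G)⁻¹ := mul_nonneg (psize_nonneg c i) hia.le
  have hb' : 0 ≤ psize c j * (spectralRad G)⁻¹ := mul_nonneg (psize_nonneg c j) hia.le
  gcongr

lemma iso_lt (G H G' H' : SimpleGraph V) [Nonempty V] (c : V → K)
    (hG : ∀ u v, G.Adj u v ↔ c u ≠ c v ∨ H.Adj u v) (hH : ∀ u v, H.Adj u v → c u = c v)
    (hG' : ∀ u v, G'.Adj u v ↔ c u ≠ c v ∨ H'.Adj u v) (hH' : ∀ u v, H'.Adj u v → c u = c v)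
    (hc : ∀ k : K, ∃ u, c u ≠ k)
    (i j : K) (hj : ∀ u v, H.Adj u v → c u = j) (hi : ∀ u v, H'.Adj u v → c u = i)
    (φ : H ≃g H') (hρ : 0 < spectralRad G) (hij : psize c i < psize c j)
    (hedge : ∃ u v, H.Adj u v) :
    spectralRad G < spectralRad G' := by
  obtain ⟨z, e, hz, hsub, -, he, h1, h2⟩ := iso_aux G H G' H' c hG hH hc i j hj hi φ hρ
  refine crit_lt G' H' c hG' hH' _ z hz hsub ?_
  have hia : 0 < (spectralRad G)⁻¹ := inv_pos.mpr hρ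
  have he := he hedge
  rw [h2]
  refine h1.ge.trans_lt ?_
  have hb : 0 ≤ psize c i * (spectralRad G)⁻¹ := mul_nonneg (psize_nonneg c i) hia.le
  have hb' : 0 ≤ psize c j * (spectralRad G)⁻¹ := mul_nonneg (psize_nonneg c j) hia.le
  gcongr

lemma numeric (t W W' s b E e : ℝ) (ht : 1 ≤ t) (hs : 0 < s) (hts : t ^ 3 * s ≤ 1 / 40)
    (hW : 0 ≤ W) (hWW : W + 1 ≤ W') (hW' : W' ≤ 4 * t ^ 2) (hb : 0 ≤ b) (hE0 : 0 ≤ E)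
    (hE : E ≤ 2 * t * s ^ 2 + W * s ^ 3 + 16 * t ^ 3 * s ^ 4)
    (he : e = 2 * t * s ^ 2 + W' * s ^ 3) :
    E / (1 + b) ^ 2 < e / ((1 + b) * (1 + b + e)) := by
  have hs3 : 0 < s ^ 3 := by positivity
  have hd : 6 / 10 * s ^ 3 ≤ e - E := by
    have h1 : 16 * t ^ 3 * s ^ 4 ≤ 16 * (1/40) * s ^ 3 := by
      have := mul_le_mul_of_nonneg_right hts hs3.le
      nlinarith
    have h2 : (W + 1) * s ^ 3 ≤ W' * s ^ 3 := mul_le_mul_of_nonneg_right hWW hs3.le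
    nlinarith
  have ht2 : t ^ 2 ≤ t ^ 3 := pow_le_pow_right₀ ht (by norm_num)
  have ht1 : t ≤ t ^ 2 := by nlinarith
  have h2s : t ^ 2 * s ≤ 1 / 40 := (mul_le_mul_of_nonneg_right ht2 hs.le).trans hts
  have h1s : t * s ≤ 1 / 40 := (mul_le_mul_of_nonneg_right ht1 hs.le).trans h2s
  have he4 : e ≤ 3 * t * s ^ 2 := by
    have h1 : W' * s ^ 3 ≤ 4 * t ^ 2 * s ^ 3 := mul_le_mul_of_nonneg_right hW' hs3.le
    have h2 : 4 * t ^ 2 * s ^ 3 = 4 * (t * s) * (t * s ^ 2) := by ring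
    have h3 : (t * s) * (t * s ^ 2) ≤ 1 / 40 * (t * s ^ 2) :=
      mul_le_mul_of_nonneg_right h1s (by positivity)
    have : 0 ≤ t * s ^ 2 := by positivity
    rw [he]; nlinarith
  have he0 : 0 < e := by linarith
  have hEe : E ≤ e := by linarith
  have hprod : E * e < e - E := by
    have h1 : E * e ≤ (3 * t * s ^ 2) * (3 * t * s ^ 2) :=
      mul_le_mul (hEe.trans he4) he4 he0.le (by positivity)
    have h2 : (3 * t * s ^ 2) * (3 * t * s ^ 2) = 9 * (t ^ 2 * s) * s ^ 3 := by ring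
    have h3 : (t ^ 2 * s) * s ^ 3 ≤ 1 / 40 * s ^ 3 := mul_le_mul_of_nonneg_right h2s hs3.le
    nlinarith
  rw [div_lt_div_iff₀ (by positivity) (by positivity)]
  have h1 : E * (1 + b + e) < e * (1 + b) := by nlinarith
  have : 0 < 1 + b := by linarith
  nlinarith [mul_lt_mul_of_pos_left h1 this]

lemma nb_const (H : SimpleGraph V) (a : ℝ) (u : V) :
    nb H (fun _ => a) u = a * nb H (fun _ => 1) u := by
  rw [← nb_smul]; simp

lemma deg_le (H : SimpleGraph V) (t : ℝ) (ht : ∑ u, nb H (fun _ => 1) u = 2 * t) (u : V) :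
    nb H (fun _ => 1) u ≤ 2 * t := by
  rw [← ht]
  exact Finset.single_le_sum (f := fun u => nb H (fun _ => 1) u)
    (fun v _ => nb_nonneg H _ (fun _ => zero_le_one) v) (Finset.mem_univ u)

lemma W2_le (H : SimpleGraph V) (t : ℝ) (ht : ∑ u, nb H (fun _ => 1) u = 2 * t) :
    ∑ u, nb H (nb H (fun _ => 1)) u ≤ 4 * t ^ 2 := by
  have h1 := nb_symm H (nb H (fun _ => 1)) (fun _ => 1)
  simp only [one_mul] at h1
  rw [h1]
  calc _ ≤ ∑ u, nb H (fun _ => 1) u * (2 * t) := Finset.sum_le_sum fun u _ =>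
        mul_le_mul_of_nonneg_left (deg_le H t ht u) (nb_nonneg H _ (fun _ => zero_le_one) u)
    _ = 4 * t ^ 2 := by rw [← Finset.sum_mul, ht]; ring

lemma zeta_excess (H : SimpleGraph V) [Nonempty V] (t ρ : ℝ) (ht : 1 ≤ t)
    (hd : ∑ u, nb H (fun _ => 1) u = 2 * t)
    (hρ : 4 * t ≤ ρ) (z : V → ℝ) (hz : ∀ u, 0 ≤ z u) (heq : ∀ u, ρ * z u = 1 + nb H z u) :
    ∑ u, (z u - ρ⁻¹) ≤ 2 * t * ρ⁻¹ ^ 2 +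
      (∑ u, nb H (nb H (fun _ => 1)) u) * ρ⁻¹ ^ 3 + 16 * t ^ 3 * ρ⁻¹ ^ 4 := by
  have hρ0 : 0 < ρ := by linarith
  set d := nb H (fun _ => 1) with hdd
  have hdn : ∀ u, 0 ≤ d u := nb_nonneg H _ (fun _ => zero_le_one)
  have hd2 : ∀ u, d u ≤ 2 * t := deg_le H t hd
  have hwn : ∀ u, 0 ≤ nb H d u := nb_nonneg H d hdn
  have hW := W2_le H t hd
  set W := ∑ u, nb H d u with hWd
  have hnbM : ∀ M, (∀ u, z u ≤ M) → ∀ u, nb H z u ≤ M * d u := by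
    intro M hM u
    rw [hdd, ← nb_const]
    exact nb_mono H _ _ hM u
  obtain ⟨u₀, hu₀⟩ := Finite.exists_max z
  have hM : z u₀ ≤ 2 * ρ⁻¹ := by
    have h1 := heq u₀
    have h2 := hnbM _ hu₀ u₀
    have h3 : z u₀ * d u₀ ≤ z u₀ * (2 * t) := mul_le_mul_of_nonneg_left (hd2 _) (hz _)
    have h4 : z u₀ * (4 * t) ≤ z u₀ * ρ := mul_le_mul_of_nonneg_left hρ (hz _)
    have h5 : z u₀ * ρ ≤ 2 := by linarith
    rw [← div_eq_mul_inv, le_div_iff₀ hρ0]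
    exact h5
  have hnb : ∀ u, nb H z u ≤ 4 * t * ρ⁻¹ := by
    intro u
    have h1 := hnbM _ (fun u => (hu₀ u).trans hM) u
    have h2 : 2 * ρ⁻¹ * d u ≤ 2 * ρ⁻¹ * (2 * t) :=
      mul_le_mul_of_nonneg_left (hd2 u) (by positivity)
    linarith
  have hz' : ∀ u, z u = ρ⁻¹ + ρ⁻¹ * nb H z u := by
    intro u; have := heq u; field_simp; linarith
  have hstep : ∀ f : V → ℝ, ∑ u, f u * z u = ρ⁻¹ * ∑ u, f u + ρ⁻¹ * ∑ u, f u * nb H z u := by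
    intro f
    rw [Finset.mul_sum, Finset.mul_sum, ← Finset.sum_add_distrib]
    refine Finset.sum_congr rfl fun u _ => ?_
    conv_lhs => rw [hz' u]
    ring
  have e1 : ∑ u, (z u - ρ⁻¹) = ρ⁻¹ * ∑ u, d u * z u := by
    have h1 : ∀ u, z u - ρ⁻¹ = ρ⁻¹ * (1 * nb H z u) := fun u => by
      conv_lhs => rw [hz' u]
      ring
    simp only [h1]
    rw [← Finset.mul_sum, nb_symm]
    congr 1
    exact Finset.sum_congr rfl fun u _ => mul_comm _ _
  have e2 : ∑ u, d u * z u = ρ⁻¹ * (2 * t) + ρ⁻¹ * ∑ u, nb H d u * z u := by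
    rw [hstep, hd, nb_symm H z d]
    congr 2
    exact Finset.sum_congr rfl fun u _ => mul_comm _ _
  have e3 : ∑ u, nb H d u * z u ≤ ρ⁻¹ * W + ρ⁻¹ * (W * (4 * t * ρ⁻¹)) := by
    rw [hstep]
    gcongr
    rw [hWd, Finset.sum_mul]
    exact Finset.sum_le_sum fun u _ => mul_le_mul_of_nonneg_left (hnb u) (hwn u)
  rw [e1, e2]
  have hi : 0 < ρ⁻¹ := inv_pos.mpr hρ0
  generalize ρ⁻¹ = s at *
  calc s * (s * (2 * t) + s * ∑ u, nb H d u * z u)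
      ≤ s * (s * (2 * t) + s * (s * W + s * (W * (4 * t * s)))) := by gcongr
    _ = 2 * t * s ^ 2 + W * s ^ 3 + 4 * t * s ^ 4 * W := by ring
    _ ≤ 2 * t * s ^ 2 + W * s ^ 3 + 4 * t * s ^ 4 * (4 * t ^ 2) := by gcongr
    _ = _ := by ring

lemma W2_lt (G H G' H' : SimpleGraph V) [Nonempty V] (c : V → K)
    (hG : ∀ u v, G.Adj u v ↔ c u ≠ c v ∨ H.Adj u v) (hH : ∀ u v, H.Adj u v → c u = c v)
    (hG' : ∀ u v, G'.Adj u v ↔ c u ≠ c v ∨ H'.Adj u v) (hH' : ∀ u v, H'.Adj u v → c u = c v)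
    (hc : ∀ k : K, ∃ u, c u ≠ k)
    (i : K) (hi : ∀ u v, H'.Adj u v → c u = i) (hmin : ∀ k, psize c i ≤ psize c k)
    (t : ℝ) (ht : 1 ≤ t)
    (hd : ∑ u, nb H (fun _ => 1) u = 2 * t) (hd' : ∑ u, nb H' (fun _ => 1) u = 2 * t)
    (hρ : 40 * t ^ 3 ≤ spectralRad G)
    (hW : ∑ u, nb H (nb H (fun _ => 1)) u + 1 ≤ ∑ u, nb H' (nb H' (fun _ => 1)) u) :
    spectralRad G < spectralRad G' := by
  obtain ⟨z, hz, heq, hsum⟩ := exists_zeta G H c hG hH hc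
  set ρ := spectralRad G with hρdef
  have ht3 : t ≤ t ^ 3 := by nlinarith [mul_self_nonneg (t - 1), mul_self_nonneg t]
  have hρ0 : 0 < ρ := by linarith
  have hE := zeta_excess H t ρ ht hd (by linarith) z hz heq
  have hi0 : 0 < ρ⁻¹ := inv_pos.mpr hρ0
  have hdiff : ∀ u, 0 ≤ z u - ρ⁻¹ := by
    intro u
    have h1 : z u - ρ⁻¹ = ρ⁻¹ * nb H z u := by
      have := heq u
      field_simp
      linarith
    rw [h1]; exact mul_nonneg hi0.le (nb_nonneg H z hz u)
  have hb : ∀ k, 0 ≤ psize c k * ρ⁻¹ := fun k => mul_nonneg (psize_nonneg c k) hi0.le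
  set W := ∑ u, nb H (nb H (fun _ => 1)) u with hWdef
  set W' := ∑ u, nb H' (nb H' (fun _ => 1)) u with hWdef'
  set d := nb H' (fun _ => 1) with hdd
  have hdn : ∀ u, 0 ≤ d u := nb_nonneg H' _ (fun _ => zero_le_one)
  have hwn : ∀ u, 0 ≤ nb H' d u := nb_nonneg H' d hdn
  set e := 2 * t * ρ⁻¹ ^ 2 + W' * ρ⁻¹ ^ 3 with hedef
  set E := ∑ u, (z u - ρ⁻¹) with hEdef
  have hE0 : 0 ≤ E := Finset.sum_nonneg fun u _ => hdiff u
  have hWn : 0 ≤ W := Finset.sum_nonneg fun u _ =>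
    nb_nonneg H _ (nb_nonneg H _ (fun _ => zero_le_one)) u
  have hW'n : 0 ≤ W' := Finset.sum_nonneg fun u _ => hwn u
  have he0 : 0 ≤ e := by positivity
  have hts : t ^ 3 * ρ⁻¹ ≤ 1 / 40 := by
    rw [← div_eq_mul_inv, div_le_iff₀ hρ0]; linarith
  have hnum := numeric t W W' ρ⁻¹ (psize c i * ρ⁻¹) E e ht hi0 hts hWn hW
    (W2_le H' t hd') (hb i) hE0 hE hedef
  -- upper bound for `G`
  have hup : 1 ≤ ∑ k, psize c k * ρ⁻¹ / (1 + psize c k * ρ⁻¹) + E / (1 + psize c i * ρ⁻¹) ^ 2 := by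
    refine hsum.ge.trans ?_
    rw [hEdef, ← psum_total c, Finset.sum_div, ← Finset.sum_add_distrib]
    refine Finset.sum_le_sum fun k _ => ?_
    have hp := psum_nonneg c _ hdiff k
    rw [psum_sub c z ρ⁻¹ k, g_delta _ _ (hb k) hp]
    have h1 : psize c i * ρ⁻¹ ≤ psize c k * ρ⁻¹ := mul_le_mul_of_nonneg_right (hmin k) hi0.le
    have h2 := hb i
    have h3 := hb k
    rw [pow_two]
    exact add_le_add le_rfl (div_le_div_of_nonneg_left hp (by positivity)
      (mul_le_mul (by linarith) (by linarith) (by linarith) (by linarith)))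
  -- test vector for `G'`
  refine crit_lt G' H' c hG' hH' ρ
    (fun u => ρ⁻¹ + (ρ⁻¹ ^ 2 * d u + ρ⁻¹ ^ 3 * nb H' d u)) (fun u => ?_) (fun u => ?_) ?_
  · have := hdn u
    have := hwn u
    positivity
  · rw [nb_add, nb_add, nb_smul, nb_smul, nb_const, ← hdd]
    have h1 : 0 ≤ ρ⁻¹ ^ 3 * nb H' (nb H' d) u :=
      mul_nonneg (by positivity) (nb_nonneg H' _ hwn u)
    have h2 : ρ * (ρ⁻¹ + (ρ⁻¹ ^ 2 * d u + ρ⁻¹ ^ 3 * nb H' d u)) =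
        1 + (ρ⁻¹ * d u + ρ⁻¹ ^ 2 * nb H' d u) := by
      field_simp
    rw [h2]
    linarith
  · have hs : ∀ k, psum c (fun u => ρ⁻¹ + (ρ⁻¹ ^ 2 * d u + ρ⁻¹ ^ 3 * nb H' d u)) k =
        psize c k * ρ⁻¹ + if k = i then e else 0 := by
      intro k
      rw [psum_sub c _ ρ⁻¹ k, psum_supp c _ i]
      · have : ∑ u, (ρ⁻¹ + (ρ⁻¹ ^ 2 * d u + ρ⁻¹ ^ 3 * nb H' d u) - ρ⁻¹) = e := by
          simp only [add_sub_cancel_left]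
          rw [Finset.sum_add_distrib, ← Finset.mul_sum, ← Finset.mul_sum, hd', hedef, hWdef']
          ring
        rw [this]
      · intro u hu
        have hiso : ∀ v, ¬ H'.Adj u v := fun v hv => hu (hi u v hv)
        rw [hdd, nb_isolated H' _ u hiso, nb_isolated H' _ u hiso]
        ring
    simp only [hs]
    rw [sum_bump _ hb _ he0]
    linarith

end compare
section final

lemma walkCount_cast {V : Type*} [Fintype V] (H : SimpleGraph V) (l : ℕ) (u : V) :
    (walkCount H (l + 1) u : ℝ) = nb H (fun v => (walkCount H l v : ℝ)) u := by
  unfold nb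
  rw [walkCount, Finset.sum_filter]
  push_cast
  rfl

lemma totalWalks_one_cast {V : Type*} [Fintype V] (H : SimpleGraph V) :
    (totalWalks H 1 : ℝ) = ∑ u, nb H (fun _ => 1) u := by
  unfold totalWalks
  push_cast
  refine Finset.sum_congr rfl fun u _ => ?_
  rw [walkCount_cast]
  simp [walkCount]

lemma totalWalks_two_cast {V : Type*} [Fintype V] (H : SimpleGraph V) :
    (totalWalks H 2 : ℝ) = ∑ u, nb H (nb H (fun _ => 1)) u := by
  unfold totalWalks
  push_cast
  refine Finset.sum_congr rfl fun u _ => ?_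
  rw [walkCount_cast]
  congr 1
  funext v
  rw [walkCount_cast]
  simp [walkCount]

lemma totalWalks_one {V : Type*} [Fintype V] (H : SimpleGraph V) :
    totalWalks H 1 = 2 * H.edgeFinset.card := by
  rw [← SimpleGraph.sum_degrees_eq_twice_card_edges]
  unfold totalWalks
  refine Finset.sum_congr rfl fun u _ => ?_
  simp only [walkCount]
  rw [Finset.sum_const, smul_eq_mul, mul_one, ← SimpleGraph.card_neighborFinset_eq_degree,
    SimpleGraph.neighborFinset_eq_filter]

lemma walkCount_iso {V : Type*} [Fintype V] {H H' : SimpleGraph V} (φ : H ≃g H') (l : ℕ) :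
    ∀ u, walkCount H' l (φ u) = walkCount H l u := by
  induction l with
  | zero => intro u; rfl
  | succ l ih =>
    intro u
    rw [walkCount, walkCount, Finset.sum_filter, Finset.sum_filter,
      ← Equiv.sum_comp φ.toEquiv]
    refine Finset.sum_congr rfl fun v _ => ?_
    have h1 : H'.Adj (φ u) (φ v) ↔ H.Adj u v := φ.map_adj_iff
    change (if H'.Adj (φ u) (φ v) then walkCount H' l (φ v) else 0) = _
    simp only [h1, ih]

lemma totalWalks_iso {V : Type*} [Fintype V] {H H' : SimpleGraph V} (φ : H ≃g H') (l : ℕ) :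
    totalWalks H' l = totalWalks H l := by
  unfold totalWalks
  rw [← Equiv.sum_comp φ.toEquiv]
  exact Finset.sum_congr rfl fun v _ => walkCount_iso φ l v

/-- The part containing a vertex. -/
def partCol (n r : ℕ) (hr : 0 < r) (v : Fin n) : Fin r := ⟨(v : ℕ) % r, Nat.mod_lt _ hr⟩

lemma psize_col (n r : ℕ) (hr : 0 < r) (i : Fin r) :
    psize (partCol n r hr) i = (partSize n r i : ℝ) := by
  unfold psize psum partSize
  rw [Finset.card_filter]
  push_cast
  refine Finset.sum_congr rfl fun u _ => ?_
  simp [partCol, Fin.ext_iff]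

lemma partSize_eq (n r : ℕ) (hr : 0 < r) (i : Fin r) :
    partSize n r i = n / r + if (i : ℕ) < n % r then 1 else 0 := by
  have h := Nat.count_modEq_card n hr (i : ℕ)
  rw [Nat.mod_eq_of_lt i.isLt] at h
  rw [← h, Nat.count_eq_card_filter_range]
  unfold partSize
  rw [Finset.card_filter, Finset.card_filter,
    ← Fin.sum_univ_eq_sum_range (fun v => if v ≡ (i : ℕ) [MOD r] then 1 else 0)]
  refine Finset.sum_congr rfl fun u _ => ?_
  simp [Nat.ModEq, Nat.mod_eq_of_lt i.isLt]

lemma fam_adj {n r t : ℕ} (hr : 0 < r) {G : SimpleGraph (Fin n)} (hG : G ∈ TuranFam n r t)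
    (u v : Fin n) : G.Adj u v ↔ partCol n r hr u ≠ partCol n r hr v ∨ (emb n r G).Adj u v := by
  have h1 := hG.1
  have h2 : (turanGraph n r).Adj u v ↔ partCol n r hr u ≠ partCol n r hr v := by
    simp [turanGraph, partCol]
  rw [← h2]
  unfold emb
  rw [SimpleGraph.sdiff_adj]
  have := @h1 u v
  tauto

lemma fam_emb {n r t : ℕ} (hr : 0 < r) {G : SimpleGraph (Fin n)} (hG : G ∈ TuranFam n r t)
    (u v : Fin n) (h : (emb n r G).Adj u v) : partCol n r hr u = partCol n r hr v :=
  Fin.ext (hG.2.1 u v h)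

lemma fam_walks {n r t : ℕ} {G : SimpleGraph (Fin n)} (hG : G ∈ TuranFam n r t) :
    totalWalks (emb n r G) 1 = 2 * t := by
  rw [totalWalks_one]
  congr 1
  rw [← hG.2.2]

lemma mem_EX_two {n r t : ℕ} {𝒢 : Set (SimpleGraph (Fin n))} (h𝒢 : 𝒢 ⊆ TuranFam n r t)
    {G : SimpleGraph (Fin n)} (hG : G ∈ 𝒢) :
    emb n r G ∈ EXiter 2 (emb n r '' 𝒢) ↔
      ∀ G' ∈ 𝒢, totalWalks (emb n r G') 2 ≤ totalWalks (emb n r G) 2 := by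
  have h1 : EXiter 1 (emb n r '' 𝒢) = emb n r '' 𝒢 := by
    ext H
    simp only [EXiter, Set.mem_setOf_eq, and_iff_left_iff_imp]
    rintro ⟨G₁, hG₁, rfl⟩ H' ⟨G₂, hG₂, rfl⟩
    rw [zero_add, fam_walks (h𝒢 hG₁), fam_walks (h𝒢 hG₂)]
  have h2 : EXiter 2 (emb n r '' 𝒢) = {H ∈ EXiter 1 (emb n r '' 𝒢) |
      ∀ H' ∈ EXiter 1 (emb n r '' 𝒢), totalWalks H' 2 ≤ totalWalks H 2} := rfl
  rw [h2, h1]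
  constructor
  · rintro ⟨-, h⟩ G' hG'
    exact h _ ⟨G', hG', rfl⟩
  · intro h
    refine ⟨⟨G, hG, rfl⟩, ?_⟩
    rintro _ ⟨G', hG', rfl⟩
    exact h G' hG'

end final

/-- (Theorem 1.4 (i).) For `t ≥ 1`, `r ≥ 2` and sufficiently large `n`:
if `𝒢` is a normal subset of `𝒯_{n,r,t}` with
`{G ∈ 𝒢 : H^G ∈ EX²(ℋ^𝒢)} ⊆ ∪_i 𝒢_i`, then
`SPEX(𝒢) = ∪_{i : n_i = ⌊n/r⌋} SPEX(𝒢_i)`. -/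
theorem stmt_12 (t r : ℕ) (ht : 1 ≤ t) (hr : 2 ≤ r) :
    ∃ N : ℕ, ∀ n : ℕ, N ≤ n →
      ∀ 𝒢 : Set (SimpleGraph (Fin n)), 𝒢 ⊆ TuranFam n r t →
        IsNormal n r 𝒢 →
        {G ∈ 𝒢 | emb n r G ∈ EXiter 2 (emb n r '' 𝒢)} ⊆ ⋃ i : Fin r, classSet n r 𝒢 i →
        SPEXset 𝒢 = ⋃ i ∈ {i : Fin r | partSize n r i = n / r}, SPEXset (classSet n r 𝒢 i) := by
  have hr0 : 0 < r := by omega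
  refine ⟨r * (40 * t ^ 3), ?_⟩
  intro n hn 𝒢 h𝒢 hnorm hEX
  have ht3 : 1 ≤ t ^ 3 := Nat.one_le_pow _ _ ht
  have hm : 40 * t ^ 3 ≤ n / r := by
    rw [Nat.le_div_iff_mul_le hr0, mul_comm]; exact hn
  have hn0 : 0 < n := by
    have : 0 < r * (40 * t ^ 3) := by positivity
    omega
  haveI : Nonempty (Fin n) := ⟨⟨0, hn0⟩⟩
  set c := partCol n r hr0 with hc_def
  have hK : ∀ k : Fin r, ∃ j, j ≠ k := by
    intro k
    haveI : Nontrivial (Fin r) := Fin.nontrivial_iff_two_le.mpr hr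
    exact exists_ne k
  have hple : ∀ k : Fin r, n / r ≤ partSize n r k := fun k => by
    rw [partSize_eq n r hr0]; omega
  have hpsz : ∀ k, psize c k = (partSize n r k : ℝ) := psize_col n r hr0
  have hc : ∀ k : Fin r, ∃ u, c u ≠ k := by
    intro k
    obtain ⟨j, hj⟩ := hK k
    have h1 : 0 < partSize n r j := lt_of_lt_of_le (by omega) (hple j)
    obtain ⟨u, hu⟩ := Finset.card_pos.mp h1
    refine ⟨u, ?_⟩
    have : c u = j := Fin.ext (by have h2 := (Finset.mem_filter.mp hu).2; exact h2)
    rw [this]; exact hj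
  have hρ : ∀ G ∈ 𝒢, 40 * (t : ℝ) ^ 3 ≤ spectralRad G := by
    intro G hG
    refine spectralRad_lower G (emb n r G) c (fam_adj hr0 (h𝒢 hG)) (fam_emb hr0 (h𝒢 hG)) _ ?_ hK
    intro k
    rw [hpsz]
    exact_mod_cast hm.trans (hple k)
  have ht1 : (1 : ℝ) ≤ t := by exact_mod_cast ht
  have hρ0 : ∀ G ∈ 𝒢, 0 < spectralRad G := by
    intro G hG
    have := hρ G hG
    have : (0 : ℝ) < 40 * (t : ℝ) ^ 3 := by positivity
    linarith
  have hdeg : ∀ G ∈ 𝒢, ∑ u, nb (emb n r G) (fun _ => 1) u = 2 * (t : ℝ) := by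
    intro G hG
    rw [← totalWalks_one_cast, fam_walks (h𝒢 hG)]
    push_cast; rfl
  have hcls : ∀ i G, G ∈ classSet n r 𝒢 i → ∀ u v, (emb n r G).Adj u v → c u = i :=
    fun i G hG u v h => Fin.ext (hG.2 u v h)
  have hcopy : ∀ i j, ∀ G ∈ classSet n r 𝒢 i, ∃ G' ∈ classSet n r 𝒢 j,
      Nonempty (emb n r G ≃g emb n r G') := by
    intro i j G hG
    by_cases hij : i = j
    · subst hij
      exact ⟨G, hG, ⟨SimpleGraph.Iso.refl⟩⟩
    · exact hnorm i j hij G hG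
  -- a smallest part
  obtain ⟨i₀, hi₀⟩ : ∃ i : Fin r, partSize n r i = n / r := by
    refine ⟨⟨r - 1, by omega⟩, ?_⟩
    rw [partSize_eq n r hr0]
    have := Nat.mod_lt n hr0
    simp only
    rw [if_neg (by omega)]
    rfl
  have hsub : SPEXset 𝒢 ⊆
      ⋃ i ∈ {i : Fin r | partSize n r i = n / r}, SPEXset (classSet n r 𝒢 i) := by
    rintro G ⟨hG, hmax⟩
    -- the embedded graph lies in `EX²`
    have hGE : emb n r G ∈ EXiter 2 (emb n r '' 𝒢) := by
      by_contra hcon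
      obtain ⟨Gs, hGs, hGsmax⟩ := Set.exists_max_image 𝒢 (fun G => totalWalks (emb n r G) 2)
        (Set.toFinite _) ⟨G, hG⟩
      have hGsE : emb n r Gs ∈ EXiter 2 (emb n r '' 𝒢) := (mem_EX_two h𝒢 hGs).mpr hGsmax
      rw [mem_EX_two h𝒢 hG] at hcon
      push Not at hcon
      obtain ⟨G₁, hG₁, hlt⟩ := hcon
      have hlt' : totalWalks (emb n r G) 2 < totalWalks (emb n r Gs) 2 :=
        hlt.trans_le (hGsmax G₁ hG₁)
      obtain ⟨i, hi⟩ := Set.mem_iUnion.mp (hEX ⟨hGs, hGsE⟩)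
      obtain ⟨G', hG', ⟨φ⟩⟩ := hcopy i i₀ Gs hi
      rw [← totalWalks_iso φ 2] at hlt'
      have hfin := W2_lt G (emb n r G) G' (emb n r G') c (fam_adj hr0 (h𝒢 hG))
        (fam_emb hr0 (h𝒢 hG)) (fam_adj hr0 (h𝒢 hG'.1)) (fam_emb hr0 (h𝒢 hG'.1)) hc i₀
        (hcls i₀ G' hG') (fun k => by
          rw [hpsz, hpsz, hi₀]; exact_mod_cast hple k) t ht1 (hdeg G hG) (hdeg G' hG'.1)
        (hρ G hG) (by
          rw [← totalWalks_two_cast, ← totalWalks_two_cast]; exact_mod_cast hlt')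
      exact absurd (hmax G' hG'.1) (not_le.mpr hfin)
    obtain ⟨j, hj⟩ := Set.mem_iUnion.mp (hEX ⟨hG, hGE⟩)
    have hjm : partSize n r j = n / r := by
      by_contra hne
      have hlt : partSize n r i₀ < partSize n r j := by
        rw [hi₀]; exact lt_of_le_of_ne (hple j) (Ne.symm hne)
      obtain ⟨G', hG', ⟨φ⟩⟩ := hcopy j i₀ G hj
      have hedge : ∃ u v, (emb n r G).Adj u v := by
        by_contra hno
        push Not at hno
        have h1 := hdeg G hG
        rw [Finset.sum_eq_zero (fun u _ => nb_isolated _ _ u (hno u))] at h1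
        linarith
      have hfin := iso_lt G (emb n r G) G' (emb n r G') c (fam_adj hr0 (h𝒢 hG))
        (fam_emb hr0 (h𝒢 hG)) (fam_adj hr0 (h𝒢 hG'.1)) (fam_emb hr0 (h𝒢 hG'.1)) hc i₀ j
        (hcls j G hj) (hcls i₀ G' hG') φ (hρ0 G hG)
        (by rw [hpsz, hpsz]; exact_mod_cast hlt) hedge
      exact absurd (hmax G' hG'.1) (not_le.mpr hfin)
    exact Set.mem_biUnion (x := j) hjm ⟨hj, fun G' hG' => hmax G' hG'.1⟩
  refine Set.Subset.antisymm hsub ?_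
  intro G hG
  obtain ⟨i, hi, hGi, hmaxi⟩ := Set.mem_iUnion₂.mp hG
  refine ⟨hGi.1, fun G' hG' => ?_⟩
  obtain ⟨Gm, hGm, hGmmax⟩ := Set.exists_max_image 𝒢 spectralRad (Set.toFinite _) ⟨G, hGi.1⟩
  obtain ⟨j, hj, hGmj, -⟩ := Set.mem_iUnion₂.mp (hsub ⟨hGm, hGmmax⟩)
  obtain ⟨G₂, hG₂, ⟨φ⟩⟩ := hcopy j i Gm hGmj
  have hfin := iso_le Gm (emb n r Gm) G₂ (emb n r G₂) c (fam_adj hr0 (h𝒢 hGm))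
    (fam_emb hr0 (h𝒢 hGm)) (fam_adj hr0 (h𝒢 hG₂.1)) (fam_emb hr0 (h𝒢 hG₂.1)) hc i j
    (hcls j Gm hGmj) (hcls i G₂ hG₂) φ (hρ0 Gm hGm)
    (by
      have h1 : partSize n r i = n / r := hi
      have h2 : partSize n r j = n / r := hj
      rw [hpsz, hpsz, h1, h2])
  exact (hGmmax G' hG').trans (hfin.trans (hmaxi G₂ hG₂))
end
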